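/- arXiv:1707.04587 — 3 statements merged into one kernel-verified Lean document; each statement's English description precedes it below -/
import Mathlib

section
/- Let G be a group acting non-elementarily, acylindrically and by isometries on a geodesic δ-hyperbolic metric space S. Then: G is not virtually cyclic; the Gromov boundary ∂S, equipped with the topology induced by the visual metric ρ, is a completely Hausdorff topological space with at least 3 points; some element of G has north–south dynamics on ∂S; and the induced action of G on ∂S satisfies condition (C). -/
/-!
Slim triangles give Gromov's four-point inequality `min ((x·y)_w) ((y·z)_w) - D ≤ (x·z)_w`, in
terms of which all estimates are made.

Let `g e` and `h e` lie far from `e` in different directions. If neither `g` nor `h` is loxodromic,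
then `g e` and `g⁻¹ e` point in roughly the same direction, and so do `h e` and `h⁻¹ e`; hence the
orbit path of `g * h` turns little and `g * h` is loxodromic. A loxodromic `f` pushes all points
away from its repelling point towards its attracting one, since `(g e · g z)_e` is large as soon as
`d (g e, e)` is large and `g⁻¹ e` does not point to `z`. If `G` were virtually cyclic, every orbit
would stay at bounded distance from an orbit of `⟨f⟩`, whose only limit points are the two fixed
points of `f`.

For condition (C), fix boundary points `u ≠ v`. A geodesic from near `u` to near `v` passes close to
two points `c₁` and `c₂` that are far apart, so by acylindricity only finitely many translates of a
given segment join a small neighbourhood of `u` to a small neighbourhood of `v`. Boundary points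
`a₁ ≠ a₂` determine a coarse centre `w`, common to all pairs in a neighbourhood of `(a₁, a₂)`; if
`g` moves such a pair into a small neighbourhood of `u`, it moves `w` there too. Hence for any two
such pairs, with centres `w` and `z`, only finitely many `g` can move the first close to `(u, u)`
and the second close to `(v, v)`.
-/

/-- A geodesic segment from `u` to `v`: the image of an isometric embedding of
`[0, dist u v]` sending the endpoints to `u` and `v`. -/
def IsGeodesicSegment {S : Type*} [MetricSpace S] (Γ : Set S) (u v : S) : Prop :=
  ∃ γ : ℝ → S, γ 0 = u ∧ γ (dist u v) = v ∧
    (∀ s ∈ Set.Icc (0 : ℝ) (dist u v), ∀ t ∈ Set.Icc (0 : ℝ) (dist u v),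
      dist (γ s) (γ t) = |s - t|) ∧
    Γ = γ '' Set.Icc (0 : ℝ) (dist u v)

/-- A geodesic metric space: every pair of points is joined by a geodesic segment. -/
def GeodesicSpace (S : Type*) [MetricSpace S] : Prop :=
  ∀ u v : S, ∃ Γ : Set S, IsGeodesicSegment Γ u v

/-- `δ`-hyperbolicity: every geodesic triangle is `δ`-slim. -/
def DeltaHyperbolic (S : Type*) [MetricSpace S] (δ : ℝ) : Prop :=
  ∀ x y z : S, ∀ Γ₁ Γ₂ Γ₃ : Set S,
    IsGeodesicSegment Γ₁ x y → IsGeodesicSegment Γ₂ y z → IsGeodesicSegment Γ₃ z x →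
    ∀ p ∈ Γ₁, Metric.infDist p (Γ₂ ∪ Γ₃) ≤ δ

/-- A (left) action of a group `G` on a set `M`, given as a plain function. -/
def IsAction {G M : Type*} [Group G] (act : G → M → M) : Prop :=
  (∀ x : M, act 1 x = x) ∧ ∀ (g h : G) (x : M), act (g * h) x = act g (act h x)

/-- An action by homeomorphisms on a topological space. -/
def IsActionByHomeos {G M : Type*} [Group G] [TopologicalSpace M] (act : G → M → M) : Prop :=
  IsAction act ∧ ∀ g : G, Continuous (act g)

/-- An action by isometries on a metric space. -/
def IsIsometricAction {G S : Type*} [Group G] [MetricSpace S] (act : G → S → S) : Prop :=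
  IsAction act ∧ ∀ g : G, Isometry (act g)

theorem IsAction.injective {G M : Type*} [Group G] {act : G → M → M}
    (h : IsAction act) (g : G) : Function.Injective (act g) := by
  intro a b hab
  have h2 := congrArg (act g⁻¹) hab
  rw [← h.2 g⁻¹ g a, ← h.2 g⁻¹ g b, inv_mul_cancel, h.1, h.1] at h2
  exact h2

/-- The Gromov product of `x` and `y` with respect to the basepoint `e`. -/
noncomputable def gprod {S : Type*} [MetricSpace S] (e x y : S) : ℝ :=
  (dist x e + dist y e - dist x y) / 2

/-- A sequence converges to infinity if its pairwise Gromov products tend to infinity. -/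
def ConvToInfty {S : Type*} [MetricSpace S] (e : S) (s : ℕ → S) : Prop :=
  Filter.Tendsto (fun p : ℕ × ℕ => gprod e (s p.1) (s p.2)) Filter.atTop Filter.atTop

/-- The type of sequences in `S` converging to infinity. -/
def BSeq (S : Type*) [MetricSpace S] (e : S) := {s : ℕ → S // ConvToInfty e s}

/-- Two sequences converging to infinity are equivalent if their mutual Gromov
products tend to infinity. -/
def bequiv {S : Type*} [MetricSpace S] (e : S) (s t : BSeq S e) : Prop :=
  Filter.Tendsto (fun n => gprod e (s.1 n) (t.1 n)) Filter.atTop Filter.atTop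

/-- The Gromov boundary of `S` with respect to the basepoint `e`. -/
def GBoundary (S : Type*) [MetricSpace S] (e : S) := Quot (bequiv (S := S) e)

/-- A sequence in `S` tends to the boundary point `x`. -/
def TendstoBd {S : Type*} [MetricSpace S] (e : S) (s : ℕ → S) (x : GBoundary S e) : Prop :=
  ∃ h : ConvToInfty e s, Quot.mk _ (⟨s, h⟩ : BSeq S e) = x

/-- The Gromov product of a point `u ∈ S` with a boundary point `x`:
the infimum over sequences tending to `x` of the liminf of Gromov products. -/
noncomputable def gprodSB {S : Type*} [MetricSpace S] (e u : S) (x : GBoundary S e) : EReal :=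
  sInf {r : EReal | ∃ s : ℕ → S, TendstoBd e s x ∧
    r = Filter.liminf (fun n => (gprod e u (s n) : EReal)) Filter.atTop}

/-- The Gromov product of two boundary points. -/
noncomputable def gprodBB {S : Type*} [MetricSpace S] (e : S) (x y : GBoundary S e) : EReal :=
  sInf {r : EReal | ∃ s t : ℕ → S, TendstoBd e s x ∧ TendstoBd e t y ∧
    r = Filter.liminf (fun p : ℕ × ℕ => (gprod e (s p.1) (t p.2) : EReal)) Filter.atTop}

/-- `UK e K x = {s ∈ S | (x·s)_e > K}`. -/
def UK {S : Type*} [MetricSpace S] (e : S) (K : ℝ) (x : GBoundary S e) : Set S :=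
  {u : S | (K : EReal) < gprodSB e u x}

/-- `d'(x,y) = exp (−ζ (x·y)_e)` on the boundary (equal to `0` when the product is `∞`). -/
noncomputable def dExp {S : Type*} [MetricSpace S] (e : S) (ζ : ℝ) (x y : GBoundary S e) : ℝ :=
  if gprodBB e x y = ⊤ then 0 else Real.exp (-ζ * (gprodBB e x y).toReal)

/-- The chain metric `ρ(x,y) = inf Σ d'(s_k, s_{k+1})` over finite chains from `x` to `y`. -/
noncomputable def rhoChain {S : Type*} [MetricSpace S] (e : S) (ζ : ℝ)
    (x y : GBoundary S e) : ℝ :=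
  sInf {r : ℝ | ∃ (n : ℕ) (c : ℕ → GBoundary S e), c 0 = x ∧ c n = y ∧
    r = ∑ k ∈ Finset.range n, dExp e ζ (c k) (c (k + 1))}

/-- `ρ` is a metric. -/
def IsMetricFn {B : Type*} (ρ : B → B → ℝ) : Prop :=
  (∀ x y, 0 ≤ ρ x y) ∧ (∀ x y, ρ x y = 0 ↔ x = y) ∧ (∀ x y, ρ x y = ρ y x) ∧
  ∀ x y z, ρ x z ≤ ρ x y + ρ y z

/-- `ζ` is a suitable visual parameter: `ζ > 0`, the associated chain function `ρ` is a
metric on the boundary, and `d'/2 ≤ ρ ≤ d'`. -/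
def VisualParam {S : Type*} [MetricSpace S] (e : S) (ζ : ℝ) : Prop :=
  0 < ζ ∧ IsMetricFn (rhoChain e ζ) ∧
  ∀ x y : GBoundary S e, dExp e ζ x y / 2 ≤ rhoChain e ζ x y ∧ rhoChain e ζ x y ≤ dExp e ζ x y

/-- The topology on the Gromov boundary induced by the visual metric `ρ`. -/
noncomputable def bdTopology (S : Type*) [MetricSpace S] (e : S) (ζ : ℝ) :
    TopologicalSpace (GBoundary S e) :=
  TopologicalSpace.generateFrom
    {B | ∃ (x : GBoundary S e) (ε : ℝ), 0 < ε ∧ B = {y | rhoChain e ζ x y < ε}}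

theorem gprod_comp_ge {S : Type*} [MetricSpace S] (e : S) {f : S → S} (hf : Isometry f)
    (a b : S) : gprod e a b - dist (f e) e ≤ gprod e (f a) (f b) := by
  have h1 : dist a e - dist (f e) e ≤ dist (f a) e := by
    have h := dist_triangle (f a) e (f e)
    rw [hf.dist_eq] at h
    have hc := dist_comm e (f e)
    linarith
  have h2 : dist b e - dist (f e) e ≤ dist (f b) e := by
    have h := dist_triangle (f b) e (f e)
    rw [hf.dist_eq] at h
    have hc := dist_comm e (f e)
    linarith
  have h3 : dist (f a) (f b) = dist a b := hf.dist_eq a b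
  simp only [gprod, h3]; linarith

theorem ConvToInfty.comp {S : Type*} [MetricSpace S] {e : S} {f : S → S} (hf : Isometry f)
    {s : ℕ → S} (hs : ConvToInfty e s) : ConvToInfty e (fun n => f (s n)) := by
  have h : Filter.Tendsto (fun p : ℕ × ℕ => gprod e (s p.1) (s p.2) + -dist (f e) e)
      Filter.atTop Filter.atTop := Filter.tendsto_atTop_add_const_right _ _ hs
  refine Filter.tendsto_atTop_mono (fun p => ?_) h
  have := gprod_comp_ge e hf (s p.1) (s p.2)
  simpa [sub_eq_add_neg] using this

/-- The map induced on the Gromov boundary by an isometry of `S`. -/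
def bdMap {S : Type*} [MetricSpace S] (e : S) (f : S → S) (hf : Isometry f) :
    GBoundary S e → GBoundary S e :=
  Quot.map (fun s : BSeq S e => (⟨fun n => f (s.1 n), s.2.comp hf⟩ : BSeq S e))
    (by
      intro s t h
      have h' : Filter.Tendsto (fun n => gprod e (s.1 n) (t.1 n) + -dist (f e) e)
          Filter.atTop Filter.atTop := Filter.tendsto_atTop_add_const_right _ _ h
      refine Filter.tendsto_atTop_mono (fun n => ?_) h'
      have := gprod_comp_ge e hf (s.1 n) (t.1 n)
      simpa [sub_eq_add_neg] using this)

/-- The induced map on pairs. -/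
def pairMap {M : Type*} (f : M → M) (p : M × M) : M × M := (f p.1, f p.2)

/-- Condition (C) for an action on a topological space. -/
def ConditionC {G M : Type*} [TopologicalSpace M] (act : G → M → M) : Prop :=
  ∀ u v : M × M, u.1 = u.2 → v.1 = v.2 → u ≠ v →
    ∃ U V : Set (M × M), IsOpen U ∧ IsOpen V ∧ u ∈ U ∧ v ∈ V ∧
      ∀ a b : M × M, a.1 ≠ a.2 → b.1 ≠ b.2 → a ≠ b →
        ∃ A B : Set (M × M), IsOpen A ∧ IsOpen B ∧ a ∈ A ∧ b ∈ B ∧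
          {g : G | (pairMap (act g) '' A ∩ U).Nonempty ∧
            (pairMap (act g) '' B ∩ V).Nonempty}.Finite

/-- Condition (C₁) for a pair of open sets `U, V`. -/
def CondC1 {G M : Type*} [TopologicalSpace M] (act : G → M → M) (U V : Set M) : Prop :=
  ∀ p q : M, p ≠ q →
    ∃ A B : Set M, IsOpen A ∧ IsOpen B ∧ p ∈ A ∧ q ∈ B ∧
      {g : G | (act g '' A ∩ U).Nonempty ∧ (act g '' A ∩ V).Nonempty ∧
        (act g '' B ∩ U).Nonempty ∧ (act g '' B ∩ V).Nonempty}.Finite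

/-- Condition (C₂) for a pair of open sets `U, V`. -/
def CondC2 {G M : Type*} [TopologicalSpace M] (act : G → M → M) (U V : Set M) : Prop :=
  ∀ p q r : M, p ≠ q → q ≠ r → p ≠ r →
    ∃ A B C : Set M, IsOpen A ∧ IsOpen B ∧ IsOpen C ∧ p ∈ A ∧ q ∈ B ∧ r ∈ C ∧
      {g : G | (act g '' A ∩ U).Nonempty ∧ (act g '' B ∩ V).Nonempty ∧
        (act g '' C ∩ U).Nonempty ∧ (act g '' C ∩ V).Nonempty}.Finite

/-- Condition (C₃) for a pair of open sets `U, V`. -/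
def CondC3 {G M : Type*} [TopologicalSpace M] (act : G → M → M) (U V : Set M) : Prop :=
  ∀ p q r s : M, p ≠ q → p ≠ r → p ≠ s → q ≠ r → q ≠ s → r ≠ s →
    ∃ A B C D : Set M, IsOpen A ∧ IsOpen B ∧ IsOpen C ∧ IsOpen D ∧
      p ∈ A ∧ q ∈ B ∧ r ∈ C ∧ s ∈ D ∧
      {g : G | (act g '' A ∩ U).Nonempty ∧ (act g '' B ∩ U).Nonempty ∧
        (act g '' C ∩ V).Nonempty ∧ (act g '' D ∩ V).Nonempty}.Finite

/-- Two points `x, y` satisfy (C₁): some open sets `U ∋ x`, `V ∋ y` satisfy (C₁). -/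
def PairC1 {G M : Type*} [TopologicalSpace M] (act : G → M → M) (x y : M) : Prop :=
  ∃ U V : Set M, IsOpen U ∧ IsOpen V ∧ x ∈ U ∧ y ∈ V ∧ CondC1 (G := G) act U V

/-- Two points `x, y` satisfy (C₂). -/
def PairC2 {G M : Type*} [TopologicalSpace M] (act : G → M → M) (x y : M) : Prop :=
  ∃ U V : Set M, IsOpen U ∧ IsOpen V ∧ x ∈ U ∧ y ∈ V ∧ CondC2 (G := G) act U V

/-- Two points `x, y` satisfy (C₃). -/
def PairC3 {G M : Type*} [TopologicalSpace M] (act : G → M → M) (x y : M) : Prop :=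
  ∃ U V : Set M, IsOpen U ∧ IsOpen V ∧ x ∈ U ∧ y ∈ V ∧ CondC3 (G := G) act U V

/-- `g` has north–south dynamics on `M` with fixed points `x ≠ y`. -/
def NorthSouthAt {G M : Type*} [Group G] [TopologicalSpace M] (act : G → M → M)
    (g : G) (x y : M) : Prop :=
  x ≠ y ∧ (∀ z : M, act g z = z ↔ z = x ∨ z = y) ∧
  ∀ U V : Set M, IsOpen U → IsOpen V → x ∈ U → y ∈ V →
    ∃ N : ℕ, ∀ n : ℕ, N < n → act (g ^ n) '' Uᶜ ⊆ V

/-- `g` has north–south dynamics on `M`. -/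
def NorthSouth {G M : Type*} [Group G] [TopologicalSpace M] (act : G → M → M) (g : G) : Prop :=
  ∃ x y : M, NorthSouthAt act g x y

/-- A completely Hausdorff space: distinct points are separated by open sets with
disjoint closures. -/
def CompletelyHausdorff (M : Type*) [TopologicalSpace M] : Prop :=
  ∀ u v : M, u ≠ v → ∃ U V : Set M, IsOpen U ∧ IsOpen V ∧ u ∈ U ∧ v ∈ V ∧
    closure U ∩ closure V = ∅

/-- An acylindrical action on a metric space. -/
def AcylindricalAction {G S : Type*} [Group G] [MetricSpace S] (act : G → S → S) : Prop :=
  ∀ ε : ℝ, 0 < ε → ∃ (R : ℝ) (N : ℕ), 0 < R ∧ 0 < N ∧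
    ∀ x y : S, R ≤ dist x y →
      {g : G | dist x (act g x) ≤ ε ∧ dist y (act g y) ≤ ε}.Finite ∧
      {g : G | dist x (act g x) ≤ ε ∧ dist y (act g y) ≤ ε}.ncard ≤ N

/-- The limit set of the action of `G` on the boundary of `S`. -/
def limitSet {G S : Type*} [Group G] [MetricSpace S] (act : G → S → S) (e : S) :
    Set (GBoundary S e) :=
  {x | ∃ (s : S) (gs : ℕ → G), TendstoBd e (fun n => act (gs n) s) x}

/-- The action is non-elementary: the limit set has at least 3 points. -/
def NonelemAction {G S : Type*} [Group G] [MetricSpace S] (act : G → S → S) (e : S) : Prop :=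
  ∃ x y z : GBoundary S e, x ∈ limitSet act e ∧ y ∈ limitSet act e ∧ z ∈ limitSet act e ∧
    x ≠ y ∧ y ≠ z ∧ x ≠ z

/-- A group is acylindrically hyperbolic if it admits a non-elementary acylindrical
isometric action on a geodesic Gromov hyperbolic space. -/
def AcylindricallyHyperbolic (G : Type*) [Group G] : Prop :=
  ∃ (S : Type) (_i : MetricSpace S) (act : G → S → S) (δ : ℝ),
    0 ≤ δ ∧ GeodesicSpace S ∧ DeltaHyperbolic S δ ∧ IsIsometricAction act ∧
    AcylindricalAction act ∧ ∃ e : S, NonelemAction act e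

/-- A group is virtually cyclic if it has a cyclic subgroup of finite index. -/
def VirtuallyCyclic (G : Type*) [Group G] : Prop :=
  ∃ H : Subgroup G, IsCyclic H ∧ H.index ≠ 0

open Filter Topology

section GromovProduct

variable {S : Type*} [MetricSpace S]

theorem gprod_comm (e x y : S) : gprod e x y = gprod e y x := by
  simp only [gprod, dist_comm x y, add_comm (dist x e)]

theorem gprod_self (e x : S) : gprod e x x = dist x e := by
  simp only [gprod, dist_self, sub_zero, add_self_div_two]

theorem gprod_nonneg (e x y : S) : 0 ≤ gprod e x y := by
  unfold gprod
  linarith [dist_triangle_right x y e]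

theorem gprod_le_dist_left (e x y : S) : gprod e x y ≤ dist x e := by
  unfold gprod
  linarith [dist_triangle_left y e x]

theorem gprod_add_gprod_swap (e c z : S) : gprod e c z + gprod c e z = dist c e := by
  unfold gprod
  rw [dist_comm e c, dist_comm e z, dist_comm c z]
  ring

theorem gprod_le_gprod_add_gprod (e c x y : S) : gprod e x y ≤ gprod c x y + gprod e c x := by
  unfold gprod
  linarith [dist_triangle y c e, dist_comm c x]

theorem gprod_le_gprod_add_dist (e c x y : S) : gprod e x y ≤ gprod c x y + dist c e :=
  (gprod_le_gprod_add_gprod e c x y).trans (by gcongr; exact gprod_le_dist_left e c x)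

theorem gprod_le_gprod_add_dist_right (e x y y' : S) :
    gprod e x y ≤ gprod e x y' + dist y y' := by
  unfold gprod
  linarith [dist_triangle y y' e, dist_triangle x y y']

theorem gprod_map_of_isometry {f : S → S} (hf : Isometry f) (e x y : S) :
    gprod (f e) (f x) (f y) = gprod e x y := by
  simp only [gprod, hf.dist_eq]

end GromovProduct

section GeodesicSegment

variable {S : Type*} [MetricSpace S] {Γ : Set S} {a b : S}

namespace IsGeodesicSegment

theorem left_mem (h : IsGeodesicSegment Γ a b) : a ∈ Γ := by
  obtain ⟨γ, h0, -, -, rfl⟩ := h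
  exact ⟨0, ⟨le_rfl, dist_nonneg⟩, h0⟩

theorem right_mem (h : IsGeodesicSegment Γ a b) : b ∈ Γ := by
  obtain ⟨γ, -, h1, -, rfl⟩ := h
  exact ⟨dist a b, ⟨dist_nonneg, le_rfl⟩, h1⟩

theorem dist_add_dist (h : IsGeodesicSegment Γ a b) {p : S} (hp : p ∈ Γ) :
    dist a p + dist p b = dist a b := by
  obtain ⟨γ, h0, h1, hγ, rfl⟩ := h
  obtain ⟨t, ht, rfl⟩ := hp
  have ha := hγ 0 ⟨le_rfl, dist_nonneg⟩ t ht
  have hb := hγ t ht (dist a b) ⟨dist_nonneg, le_rfl⟩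
  rw [h0, zero_sub, abs_neg, abs_of_nonneg ht.1] at ha
  rw [h1, abs_sub_comm, abs_of_nonneg (sub_nonneg.2 ht.2)] at hb
  linarith

theorem exists_mem_dist_eq (h : IsGeodesicSegment Γ a b) {r : ℝ} (h0 : 0 ≤ r)
    (hr : r ≤ dist a b) : ∃ p ∈ Γ, dist a p = r := by
  obtain ⟨γ, rfl, -, hγ, rfl⟩ := h
  refine ⟨γ r, ⟨r, ⟨h0, hr⟩, rfl⟩, ?_⟩
  rw [hγ 0 ⟨le_rfl, dist_nonneg⟩ r ⟨h0, hr⟩, zero_sub, abs_neg, abs_of_nonneg h0]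

theorem exists_continuousOn (h : IsGeodesicSegment Γ a b) :
    ∃ γ : ℝ → S, ContinuousOn γ (Set.Icc 0 (dist a b)) ∧ Γ = γ '' Set.Icc 0 (dist a b) := by
  obtain ⟨γ, -, -, hγ, rfl⟩ := h
  have hlip : LipschitzOnWith 1 γ (Set.Icc 0 (dist a b)) :=
    LipschitzOnWith.of_dist_le_mul fun s hs t ht => by
      rw [hγ s hs t ht, Real.dist_eq, NNReal.coe_one, one_mul]
  exact ⟨γ, hlip.continuousOn, rfl⟩

theorem isCompact (h : IsGeodesicSegment Γ a b) : IsCompact Γ := by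
  obtain ⟨γ, hγ, rfl⟩ := h.exists_continuousOn
  exact isCompact_Icc.image_of_continuousOn hγ

theorem isPreconnected (h : IsGeodesicSegment Γ a b) : IsPreconnected Γ := by
  obtain ⟨γ, hγ, rfl⟩ := h.exists_continuousOn
  exact isPreconnected_Icc.image γ hγ

theorem gprod_le_infDist (h : IsGeodesicSegment Γ a b) (p : S) :
    gprod p a b ≤ Metric.infDist p Γ := by
  refine (Metric.le_infDist ⟨a, h.left_mem⟩).2 fun q hq => ?_
  unfold gprod
  linarith [h.dist_add_dist hq, dist_triangle a q p, dist_triangle b q p, dist_comm p q,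
    dist_comm b q]

end IsGeodesicSegment

theorem infDist_union {X : Type*} [PseudoMetricSpace X] {A B : Set X} (hA : A.Nonempty)
    (hB : B.Nonempty) (p : X) :
    Metric.infDist p (A ∪ B) = min (Metric.infDist p A) (Metric.infDist p B) := by
  simp only [Metric.infDist, Metric.infEDist_union,
    ENNReal.toReal_min (Metric.infEDist_ne_top hA) (Metric.infEDist_ne_top hB)]

end GeodesicSegment

section Hyperbolicity

variable {S : Type*} [MetricSpace S]

/-- Gromov's four-point form of hyperbolicity, required at every basepoint; it replaces slim
triangles in all estimates at infinity. -/
def GromovHyperbolic (S : Type*) [MetricSpace S] (D : ℝ) : Prop :=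
  ∀ w x y z : S, min (gprod w x y) (gprod w y z) - D ≤ gprod w x z

namespace DeltaHyperbolic

variable {δ : ℝ}

theorem infDist_le_or (h : DeltaHyperbolic S δ) {x y z p : S} {Γ₁ Γ₂ Γ₃ : Set S}
    (h₁ : IsGeodesicSegment Γ₁ x y) (h₂ : IsGeodesicSegment Γ₂ y z)
    (h₃ : IsGeodesicSegment Γ₃ z x) (hp : p ∈ Γ₁) :
    Metric.infDist p Γ₂ ≤ δ ∨ Metric.infDist p Γ₃ ≤ δ := by
  have hslim := h x y z Γ₁ Γ₂ Γ₃ h₁ h₂ h₃ p hp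
  rwa [infDist_union ⟨y, h₂.left_mem⟩ ⟨z, h₃.left_mem⟩, min_le_iff] at hslim

/-- The points of a side close to the second side and those close to the third one form two closed
sets covering the connected first side. -/
theorem exists_mem_infDist_le (h : DeltaHyperbolic S δ) {x y z : S} {Γ₁ Γ₂ Γ₃ : Set S}
    (h₁ : IsGeodesicSegment Γ₁ x y) (h₂ : IsGeodesicSegment Γ₂ y z)
    (h₃ : IsGeodesicSegment Γ₃ z x) :
    ∃ p ∈ Γ₁, Metric.infDist p Γ₂ ≤ δ ∧ Metric.infDist p Γ₃ ≤ δ := by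
  have hδ : 0 ≤ δ := Metric.infDist_nonneg.trans (h x y z _ _ _ h₁ h₂ h₃ x h₁.left_mem)
  have hclosed (Γ : Set S) : IsClosed {p | Metric.infDist p Γ ≤ δ} :=
    isClosed_le (Metric.continuous_infDist_pt Γ) continuous_const
  have hy : Metric.infDist y Γ₂ ≤ δ := (Metric.infDist_zero_of_mem h₂.left_mem).trans_le hδ
  have hx : Metric.infDist x Γ₃ ≤ δ := (Metric.infDist_zero_of_mem h₃.right_mem).trans_le hδ
  exact isPreconnected_closed_iff.1 h₁.isPreconnected _ _ (hclosed Γ₂) (hclosed Γ₃)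
    (fun p hp => h.infDist_le_or h₁ h₂ h₃ hp) ⟨y, h₁.right_mem, hy⟩ ⟨x, h₁.left_mem, hx⟩

theorem exists_mem_dist_le (h : DeltaHyperbolic S δ) (hgeo : GeodesicSpace S) {x y : S}
    {Γ : Set S} (hΓ : IsGeodesicSegment Γ x y) (c : S) :
    ∃ p ∈ Γ, dist p c ≤ gprod c x y + 2 * δ := by
  obtain ⟨Γ₂, h₂⟩ := hgeo y c
  obtain ⟨Γ₃, h₃⟩ := hgeo c x
  obtain ⟨p, hp, hp₂, hp₃⟩ := h.exists_mem_infDist_le hΓ h₂ h₃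
  have hy := (h₂.gprod_le_infDist p).trans hp₂
  have hx := (h₃.gprod_le_infDist p).trans hp₃
  refine ⟨p, hp, ?_⟩
  unfold gprod at *
  linarith [hΓ.dist_add_dist hp, dist_comm x p, dist_comm y p, dist_comm c p, dist_comm c x]

theorem gromovHyperbolic (h : DeltaHyperbolic S δ) (hgeo : GeodesicSpace S) :
    GromovHyperbolic S (3 * δ) := by
  intro w x y z
  obtain ⟨Γ₁, h₁⟩ := hgeo x z
  obtain ⟨Γ₂, h₂⟩ := hgeo z y
  obtain ⟨Γ₃, h₃⟩ := hgeo y x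
  obtain ⟨p, hp, hpw⟩ := h.exists_mem_dist_le hgeo h₁ w
  rw [gprod_comm w x y, gprod_comm w y z, sub_le_iff_le_add, min_le_iff]
  rcases h.infDist_le_or h₁ h₂ h₃ hp with hd | hd
  · right
    linarith [gprod_le_gprod_add_dist w p z y, h₂.gprod_le_infDist p]
  · left
    linarith [gprod_le_gprod_add_dist w p y x, h₃.gprod_le_infDist p]

end DeltaHyperbolic

namespace GromovHyperbolic

variable {D k : ℝ} {w x y z t : S}

theorem const_nonneg (hD : GromovHyperbolic S D) (w : S) : 0 ≤ D := by
  have h := hD w w w w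
  rw [min_self] at h
  linarith

theorem le_gprod_trans (hD : GromovHyperbolic S D) (hxy : k ≤ gprod w x y)
    (hyz : k ≤ gprod w y z) : k - D ≤ gprod w x z :=
  (sub_le_sub_right (le_min hxy hyz) D).trans (hD w x y z)

theorem le_gprod_trans₂ (hD : GromovHyperbolic S D) (hxy : k ≤ gprod w x y)
    (hyz : k ≤ gprod w y z) (hzt : k ≤ gprod w z t) : k - 2 * D ≤ gprod w x t := by
  have h := hD.le_gprod_trans (hD.le_gprod_trans hxy hyz)
    (by linarith [hD.const_nonneg w] : k - D ≤ gprod w z t)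
  linarith

theorem gprod_le_of_lt (hD : GromovHyperbolic S D) (hxz : gprod w x z ≤ k)
    (hxy : k + D < gprod w x y) : gprod w y z ≤ k + D := by
  by_contra! hyz
  have h := hD w x y z
  have := lt_min hxy hyz
  linarith

theorem dist_add_dist_le (hD : GromovHyperbolic S D) (x y z w : S) :
    dist x z + dist y w ≤ max (dist x y + dist z w) (dist y z + dist x w) + 2 * D := by
  have h := hD w x y z
  simp only [gprod] at h
  rcases min_le_iff.1 (sub_le_iff_le_add.1 h) with h | h
  · linarith [le_max_left (dist x y + dist z w) (dist y z + dist x w)]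
  · linarith [le_max_right (dist x y + dist z w) (dist y z + dist x w)]

theorem exists_mem_dist_le (hD : GromovHyperbolic S D) {Γ : Set S}
    (hΓ : IsGeodesicSegment Γ x y) (c : S) : ∃ p ∈ Γ, dist p c ≤ gprod c x y + 2 * D := by
  obtain ⟨p, hp, hpx⟩ := hΓ.exists_mem_dist_eq (gprod_nonneg x y c)
    ((gprod_le_dist_left x y c).trans_eq (dist_comm y x))
  have h := hD.dist_add_dist_le x p y c
  have hpxy := hΓ.dist_add_dist hp
  refine ⟨p, hp, ?_⟩
  unfold gprod at *
  rcases max_choice (dist x p + dist y c) (dist p y + dist x c) with hm | hm <;>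
    rw [hm] at h <;> linarith [dist_comm x y, dist_comm x c]

end GromovHyperbolic

end Hyperbolicity

section Boundary

variable {S : Type*} [MetricSpace S] {e : S} {D : ℝ}

/-- Two sequences are asymptotic if their mutual Gromov products tend to infinity as both indices
do so independently; `ConvToInfty e s` unfolds to `IsAsymptotic e s s`. -/
def IsAsymptotic (e : S) (s t : ℕ → S) : Prop :=
  Tendsto (fun p : ℕ × ℕ => gprod e (s p.1) (t p.2)) atTop atTop

namespace IsAsymptotic

variable {s s' t t' : ℕ → S}

theorem symm (h : IsAsymptotic e s t) : IsAsymptotic e t s := by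
  refine tendsto_atTop.2 fun c => eventually_atTop_prod_self'.2 ?_
  obtain ⟨N, hN⟩ := eventually_atTop_prod_self'.1 (tendsto_atTop.1 h c)
  exact ⟨N, fun i hi j hj => gprod_comm e (s j) (t i) ▸ hN j hj i hi⟩

theorem eventually_le_gprod (hD : GromovHyperbolic S D) (hs : IsAsymptotic e s' s)
    (ht : IsAsymptotic e t t') {c : ℝ}
    (h : ∃ᶠ p : ℕ × ℕ in atTop, c ≤ gprod e (s p.1) (t p.2)) :
    ∀ᶠ p : ℕ × ℕ in atTop, c - 2 * D ≤ gprod e (s' p.1) (t' p.2) := by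
  obtain ⟨N, hN⟩ := eventually_atTop_prod_self'.1 (tendsto_atTop.1 hs c)
  obtain ⟨M, hM⟩ := eventually_atTop_prod_self'.1 (tendsto_atTop.1 ht c)
  obtain ⟨⟨k, l⟩, hkl, hc⟩ := frequently_atTop.1 h (N, M)
  filter_upwards [eventually_ge_atTop (N, M)] with p hp
  exact hD.le_gprod_trans₂ (hN p.1 hp.1 k hkl.1) hc (hM l hkl.2 p.2 hp.2)

theorem of_frequently (hD : GromovHyperbolic S D) (hs : IsAsymptotic e s' s)
    (ht : IsAsymptotic e t t')
    (h : ∀ c : ℝ, ∃ᶠ p : ℕ × ℕ in atTop, c ≤ gprod e (s p.1) (t p.2)) :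
    IsAsymptotic e s' t' :=
  tendsto_atTop.2 fun c => (hs.eventually_le_gprod hD ht (h (c + 2 * D))).mono fun p hp => by
    linarith

theorem of_dist_le (h : IsAsymptotic e s t) {B : ℝ} (hB : ∀ n, dist (t n) (t' n) ≤ B) :
    IsAsymptotic e s t' :=
  tendsto_atTop_mono
    (fun p => by linarith [gprod_le_gprod_add_dist_right e (s p.1) (t p.2) (t' p.2), hB p.2])
    (tendsto_atTop_add_const_right _ (-B) h)

theorem of_bequiv (hD : GromovHyperbolic S D) {s t : BSeq S e} (h : bequiv e s t) :
    IsAsymptotic e s.1 t.1 := by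
  refine of_frequently hD s.2 t.2 fun c => frequently_atTop.2 fun p => ?_
  obtain ⟨n, hn, hc⟩ := ((eventually_ge_atTop (max p.1 p.2)).and (tendsto_atTop.1 h c)).exists
  exact ⟨(n, n), ⟨(le_max_left _ _).trans hn, (le_max_right _ _).trans hn⟩, hc⟩

/-- In particular `bequiv` is already an equivalence relation. -/
theorem of_tendstoBd (hD : GromovHyperbolic S D) {x : GBoundary S e} (hs : TendstoBd e s x)
    (ht : TendstoBd e t x) : IsAsymptotic e s t := by
  obtain ⟨hs, rfl⟩ := hs
  obtain ⟨ht, hts⟩ := ht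
  have of_eqvGen {a b : BSeq S e} (hab : Relation.EqvGen (bequiv e) a b) :
      IsAsymptotic e a.1 b.1 := by
    induction hab with
    | rel _ _ h => exact of_bequiv hD h
    | refl a => exact a.2
    | symm _ _ _ ih => exact ih.symm
    | trans _ b _ _ _ ihab ihbc =>
      exact of_frequently hD ihab ihbc fun c => (tendsto_atTop.1 b.2 c).frequently
  exact of_eqvGen (Quot.eqvGen_exact hts.symm)

theorem eq {x y : GBoundary S e} (h : IsAsymptotic e s t) (hs : TendstoBd e s x)
    (ht : TendstoBd e t y) : x = y := by
  obtain ⟨hs, rfl⟩ := hs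
  obtain ⟨ht, rfl⟩ := ht
  exact Quot.sound (Tendsto.comp h tendsto_atTop_diagonal)

end IsAsymptotic

theorem exists_tendstoBd (x : GBoundary S e) : ∃ s, TendstoBd e s x := by
  obtain ⟨s, rfl⟩ := Quot.exists_rep x
  exact ⟨s.1, s.2, rfl⟩

namespace TendstoBd

variable {s t : ℕ → S} {x y : GBoundary S e}

theorem of_isAsymptotic (hs : TendstoBd e s x) (ht : ConvToInfty e t)
    (h : IsAsymptotic e s t) : TendstoBd e t x :=
  ⟨ht, (h.eq hs ⟨ht, rfl⟩).symm⟩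

theorem of_dist_le (hs : TendstoBd e s x) {B : ℝ} (hB : ∀ n, dist (s n) (t n) ≤ B) :
    TendstoBd e t x := by
  have hst : IsAsymptotic e s t := IsAsymptotic.of_dist_le hs.1 hB
  exact hs.of_isAsymptotic (hst.symm.of_dist_le hB) hst

theorem bdMap (hs : TendstoBd e s x) {f : S → S} (hf : Isometry f) :
    TendstoBd e (fun n => f (s n)) (bdMap e f hf x) := by
  obtain ⟨h, rfl⟩ := hs
  exact ⟨h.comp hf, rfl⟩

theorem eq_of_frequently (hD : GromovHyperbolic S D) (hs : TendstoBd e s x)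
    (ht : TendstoBd e t y)
    (h : ∀ c : ℝ, ∃ᶠ p : ℕ × ℕ in atTop, c ≤ gprod e (s p.1) (t p.2)) : x = y :=
  (IsAsymptotic.of_frequently hD hs.1 ht.1 h).eq hs ht

theorem unique (hD : GromovHyperbolic S D) (hx : TendstoBd e s x) (hy : TendstoBd e s y) :
    x = y :=
  hx.eq_of_frequently hD hy fun c => (tendsto_atTop.1 hx.1 c).frequently

theorem eventually_gprod_le_of_ne (hD : GromovHyperbolic S D) (hs : TendstoBd e s x)
    (ht : TendstoBd e t y) (hxy : x ≠ y) :
    ∃ L : ℝ, ∀ᶠ p : ℕ × ℕ in atTop, gprod e (s p.1) (t p.2) ≤ L := by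
  by_contra! hL
  exact hxy (hs.eq_of_frequently hD ht fun c => (hL c).mono fun _ hp => hp.le)

theorem tendsto_dist (hs : TendstoBd e s x) : Tendsto (fun n => dist (s n) e) atTop atTop := by
  simpa only [Function.comp_def, gprod_self] using Tendsto.comp hs.1 tendsto_atTop_diagonal

end TendstoBd

section BoundaryGprod

variable {x y : GBoundary S e} {K c : ℝ} {s t : ℕ → S}

theorem eventually_lt_gprod_of_lt_gprodBB (h : (K : EReal) < gprodBB e x y)
    (hs : TendstoBd e s x) (ht : TendstoBd e t y) :
    ∀ᶠ p : ℕ × ℕ in atTop, K < gprod e (s p.1) (t p.2) :=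
  (eventually_lt_of_lt_liminf (h.trans_le (sInf_le ⟨s, t, hs, ht, rfl⟩))).mono
    fun _ hp => EReal.coe_lt_coe_iff.1 hp

theorem le_gprodBB (h : ∀ s t : ℕ → S, TendstoBd e s x → TendstoBd e t y →
    ∀ᶠ p : ℕ × ℕ in atTop, c ≤ gprod e (s p.1) (t p.2)) : (c : EReal) ≤ gprodBB e x y := by
  refine le_sInf ?_
  rintro _ ⟨s, t, hs, ht, rfl⟩
  exact le_liminf_of_le (by isBoundedDefault) ((h s t hs ht).mono fun _ => EReal.coe_le_coe)

theorem gprodBB_nonneg (x y : GBoundary S e) : 0 ≤ gprodBB e x y := by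
  rw [← EReal.coe_zero]
  exact le_gprodBB fun _ _ _ _ => Eventually.of_forall fun _ => gprod_nonneg e _ _

theorem gprodBB_comm (x y : GBoundary S e) : gprodBB e x y = gprodBB e y x := by
  have le (x y : GBoundary S e) : gprodBB e x y ≤ gprodBB e y x := by
    refine le_sInf ?_
    rintro _ ⟨t, s, ht, hs, rfl⟩
    refine sInf_le ⟨s, t, hs, ht, ?_⟩
    conv_lhs => rw [← prod_atTop_atTop_eq, prod_comm, ← liminf_comp]
    simp only [Function.comp_def, Prod.fst_swap, Prod.snd_swap, gprod_comm e (t _),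
      prod_atTop_atTop_eq]
  exact (le x y).antisymm (le y x)

theorem eq_of_forall_lt_gprodBB (h : ∀ K : ℝ, (K : EReal) < gprodBB e x y) : x = y := by
  obtain ⟨s, hs⟩ := exists_tendstoBd x
  obtain ⟨t, ht⟩ := exists_tendstoBd y
  have hst : IsAsymptotic e s t := tendsto_atTop.2 fun K =>
    (eventually_lt_gprod_of_lt_gprodBB (h K) hs ht).mono fun _ hp => hp.le
  exact hst.eq hs ht

theorem exists_gprodBB_le_of_ne (hxy : x ≠ y) : ∃ L : ℝ, gprodBB e x y ≤ L := by
  by_contra! hL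
  exact hxy (eq_of_forall_lt_gprodBB hL)

end BoundaryGprod

section Neighbourhoods

variable {x y : GBoundary S e} {K c : ℝ} {a b : S} {s : ℕ → S}

theorem eventually_lt_gprod_of_mem_UK (ha : a ∈ UK e K x) (hs : TendstoBd e s x) :
    ∀ᶠ n in atTop, K < gprod e a (s n) := by
  have hlim : (K : EReal) < liminf (fun n => (gprod e a (s n) : EReal)) atTop :=
    lt_of_lt_of_le ha (sInf_le ⟨s, hs, rfl⟩)
  exact (eventually_lt_of_lt_liminf hlim).mono fun _ hn => EReal.coe_lt_coe_iff.1 hn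

theorem UK_antitone (x : GBoundary S e) : Antitone fun K => UK e K x :=
  fun _ _ hK _ ha => (EReal.coe_le_coe hK).trans_lt ha

theorem mem_UK_of_frequently_le (hD : GromovHyperbolic S D) (hs : TendstoBd e s x)
    (h : ∃ᶠ n in atTop, c ≤ gprod e a (s n)) (hK : K < c - D) : a ∈ UK e K x := by
  refine (EReal.coe_lt_coe hK).trans_le (le_sInf ?_)
  rintro _ ⟨t, ht, rfl⟩
  obtain ⟨N, hN⟩ := eventually_atTop_prod_self'.1
    (tendsto_atTop.1 (IsAsymptotic.of_tendstoBd hD hs ht) c)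
  obtain ⟨n, hn, hc⟩ := frequently_atTop.1 h N
  refine le_liminf_of_le (by isBoundedDefault) ?_
  filter_upwards [eventually_ge_atTop N] with m hm
  exact EReal.coe_le_coe (hD.le_gprod_trans hc (hN n hn m hm))

theorem TendstoBd.eventually_mem_UK (hD : GromovHyperbolic S D) (hs : TendstoBd e s x) (K : ℝ) :
    ∀ᶠ n in atTop, s n ∈ UK e K x := by
  obtain ⟨N, hN⟩ := eventually_atTop_prod_self'.1 (tendsto_atTop.1 hs.1 (K + D + 1))
  filter_upwards [eventually_ge_atTop N] with n hn
  refine mem_UK_of_frequently_le hD hs (c := K + D + 1) ?_ (by linarith)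
  exact Eventually.frequently (eventually_atTop.2 ⟨N, hN n hn⟩)

theorem le_gprod_of_mem_UK (hD : GromovHyperbolic S D) (ha : a ∈ UK e K x) (hb : b ∈ UK e K x) :
    K - D ≤ gprod e a b := by
  obtain ⟨s, hs⟩ := exists_tendstoBd x
  obtain ⟨n, han, hbn⟩ := ((eventually_lt_gprod_of_mem_UK ha hs).and
    (eventually_lt_gprod_of_mem_UK hb hs)).exists
  exact hD.le_gprod_trans han.le (gprod_comm e b (s n) ▸ hbn.le)

theorem le_gprodBB_of_mem_UK (hD : GromovHyperbolic S D) (ha : a ∈ UK e K x) (hb : b ∈ UK e K y)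
    (hab : K ≤ gprod e a b) : ((K - 2 * D : ℝ) : EReal) ≤ gprodBB e x y := by
  refine le_gprodBB fun s t hs ht => ?_
  rw [← prod_atTop_atTop_eq]
  filter_upwards [(eventually_lt_gprod_of_mem_UK ha hs).prod_mk
    (eventually_lt_gprod_of_mem_UK hb ht)] with p hp
  exact hD.le_gprod_trans₂ (gprod_comm e a _ ▸ hp.1.le) hab hp.2.le

end Neighbourhoods

end Boundary

section VisualTopology

theorem generateFrom_dist_lt (X : Type*) [t : PseudoMetricSpace X] :
    TopologicalSpace.generateFrom {B : Set X | ∃ x ε, 0 < ε ∧ B = {y | dist x y < ε}} =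
      t.toUniformSpace.toTopologicalSpace := by
  refine (TopologicalSpace.isTopologicalBasis_of_isOpen_of_nhds ?_ ?_).eq_generateFrom.symm
  · rintro _ ⟨x, ε, -, rfl⟩
    exact isOpen_lt (by fun_prop) continuous_const
  · intro x U hx hU
    obtain ⟨ε, hε, hεU⟩ := Metric.isOpen_iff.1 hU x hx
    refine ⟨{y | dist x y < ε}, ⟨x, ε, hε, rfl⟩, ?_, fun y hy => hεU ?_⟩
    · rwa [Set.mem_ofPred_eq, dist_self]
    · rwa [Metric.mem_ball']

theorem completelyHausdorff_of_t25Space (M : Type*) [TopologicalSpace M] [T25Space M] :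
    CompletelyHausdorff M := by
  intro u v huv
  obtain ⟨U, hu, hU, V, hv, hV, hUV⟩ := exists_open_nhds_disjoint_closure huv
  exact ⟨U, V, hU, hV, hu, hv, hUV.inter_eq⟩

variable {S : Type*} [MetricSpace S] {e : S} {ζ : ℝ}

/-- The Gromov boundary with the visual metric `ρ`. It is kept out of instance search because it
depends on `ζ`. -/
noncomputable abbrev VisualParam.metricSpace (hζ : VisualParam e ζ) :
    MetricSpace (GBoundary S e) where
  dist := rhoChain e ζ
  dist_self x := (hζ.2.1.2.1 x x).2 rfl
  dist_comm := hζ.2.1.2.2.1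
  dist_triangle := hζ.2.1.2.2.2
  eq_of_dist_eq_zero := (hζ.2.1.2.1 _ _).1

theorem bdTopology_eq (hζ : VisualParam e ζ) :
    bdTopology S e ζ = hζ.metricSpace.toUniformSpace.toTopologicalSpace :=
  @generateFrom_dist_lt (GBoundary S e) hζ.metricSpace.toPseudoMetricSpace

theorem completelyHausdorff_bdTopology (hζ : VisualParam e ζ) :
    @CompletelyHausdorff (GBoundary S e) (bdTopology S e ζ) := by
  rw [bdTopology_eq hζ]
  let _ := hζ.metricSpace
  exact completelyHausdorff_of_t25Space _

theorem dExp_lt_exp_iff (hζ : 0 < ζ) {x y : GBoundary S e} {K : ℝ} :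
    dExp e ζ x y < Real.exp (-ζ * K) ↔ (K : EReal) < gprodBB e x y := by
  unfold dExp
  rcases eq_or_ne (gprodBB e x y) ⊤ with htop | htop
  · simp only [htop, if_true, Real.exp_pos, EReal.coe_lt_top]
  · have hbot : gprodBB e x y ≠ ⊥ := (EReal.bot_lt_zero.trans_le (gprodBB_nonneg x y)).ne'
    rw [if_neg htop, Real.exp_lt_exp, mul_lt_mul_left_of_neg (neg_lt_zero.2 hζ),
      ← EReal.coe_lt_coe_iff, EReal.coe_toReal htop hbot]

/-- `ρ` and `exp (-ζ (x·y)_e)` differ by a factor of at most `2`. -/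
theorem hasBasis_nhds_gprodBB (hζ : VisualParam e ζ) (x : GBoundary S e) :
    (@nhds _ (bdTopology S e ζ) x).HasBasis (fun _ : ℝ => True)
      fun K => {y | (K : EReal) < gprodBB e x y} := by
  rw [bdTopology_eq hζ]
  let _ := hζ.metricSpace
  refine Metric.nhds_basis_ball.to_hasBasis (fun ε hε => ?_) fun K _ => ?_
  · refine ⟨-Real.log ε / ζ, trivial, fun y hy => Metric.mem_ball'.2 ?_⟩
    have hlog : -ζ * (-Real.log ε / ζ) = Real.log ε := by field_simp [hζ.1.ne']
    have hd := (dExp_lt_exp_iff hζ.1).2 hy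
    rw [hlog, Real.exp_log hε] at hd
    exact (hζ.2.2 x y).2.trans_lt hd
  · refine ⟨Real.exp (-ζ * K) / 2, by positivity, fun y hy => (dExp_lt_exp_iff hζ.1).1 ?_⟩
    have hρ : rhoChain e ζ x y < Real.exp (-ζ * K) / 2 := Metric.mem_ball'.1 hy
    linarith [(hζ.2.2 x y).1]

end VisualTopology

section IsometricAction

variable {G S : Type*} [Group G] [MetricSpace S] {act : G → S → S}

namespace IsIsometricAction

theorem inv_act_act (hact : IsIsometricAction act) (g : G) (x : S) : act g⁻¹ (act g x) = x := by
  rw [← hact.1.2, inv_mul_cancel, hact.1.1]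

theorem act_inv_act (hact : IsIsometricAction act) (g : G) (x : S) : act g (act g⁻¹ x) = x := by
  rw [← hact.1.2, mul_inv_cancel, hact.1.1]

theorem dist_act_left (hact : IsIsometricAction act) (g : G) (x y : S) :
    dist (act g x) y = dist x (act g⁻¹ y) := by
  rw [← (hact.2 g⁻¹).dist_eq, hact.inv_act_act]

theorem dist_inv_act (hact : IsIsometricAction act) (g : G) (e : S) :
    dist (act g⁻¹ e) e = dist (act g e) e := by
  rw [dist_comm, hact.dist_act_left]

theorem gprod_act_act (hact : IsIsometricAction act) (g : G) (e z : S) :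
    gprod e (act g e) (act g z) = dist (act g e) e - gprod e (act g⁻¹ e) z := by
  simp only [gprod, (hact.2 g).dist_eq, hact.dist_inv_act, hact.dist_act_left g z e,
    dist_comm e z, dist_comm z (act g⁻¹ e)]
  ring

theorem dist_mul_act (hact : IsIsometricAction act) (g h : G) (e : S) :
    dist (act (g * h) e) e =
      dist (act g e) e + dist (act h e) e - 2 * gprod e (act g⁻¹ e) (act h e) := by
  rw [hact.1.2, hact.dist_act_left, gprod, hact.dist_inv_act, dist_comm (act h e) (act g⁻¹ e)]
  ring

theorem dist_act_pow_add (hact : IsIsometricAction act) (f : G) (e : S) (n k : ℕ) :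
    dist (act (f ^ n) e) (act (f ^ (n + k)) e) = dist (act (f ^ k) e) e := by
  rw [pow_add, hact.1.2, (hact.2 _).dist_eq, dist_comm]

/-- The action on the Gromov boundary induced by an isometric action. -/
def boundaryAct (hact : IsIsometricAction act) (e : S) (g : G) :
    GBoundary S e → GBoundary S e :=
  bdMap e (act g) (hact.2 g)

theorem isAction_boundaryAct (hact : IsIsometricAction act) (e : S) :
    IsAction (hact.boundaryAct e) := by
  constructor
  · rintro ⟨s⟩
    exact congrArg (Quot.mk _) (Subtype.ext (funext fun n => hact.1.1 (s.1 n)))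
  · rintro g h ⟨s⟩
    exact congrArg (Quot.mk _) (Subtype.ext (funext fun n => hact.1.2 g h (s.1 n)))

theorem tendstoBd_act (hact : IsIsometricAction act) {e : S} {s : ℕ → S} {x : GBoundary S e}
    (hs : TendstoBd e s x) (g : G) :
    TendstoBd e (fun n => act g (s n)) (hact.boundaryAct e g x) :=
  hs.bdMap (hact.2 g)

theorem mem_limitSet_iff (hact : IsIsometricAction act) {e : S} {x : GBoundary S e} :
    x ∈ limitSet act e ↔ ∃ g : ℕ → G, TendstoBd e (fun n => act (g n) e) x := by
  refine ⟨?_, fun ⟨g, hg⟩ => ⟨e, g, hg⟩⟩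
  rintro ⟨s, g, hg⟩
  exact ⟨g, hg.of_dist_le fun n => ((hact.2 (g n)).dist_eq s e).le⟩

theorem act_mem_UK_boundaryAct (hact : IsIsometricAction act) {D : ℝ}
    (hD : GromovHyperbolic S D) {e : S} {g : G} {z : GBoundary S e} {K K' : ℝ}
    (hg : act g⁻¹ e ∉ UK e K z) (hK : K + K' + 2 * D < dist (act g e) e) :
    act g e ∈ UK e K' (hact.boundaryAct e g z) := by
  obtain ⟨C, hKC, hCK⟩ : ∃ C, K < C - D ∧ K' < dist (act g e) e - C - D :=
    ⟨(K + D + (dist (act g e) e - K' - D)) / 2, by linarith, by linarith⟩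
  obtain ⟨s, hs⟩ := exists_tendstoBd z
  have hev : ∀ᶠ n in atTop, gprod e (act g⁻¹ e) (s n) < C := by
    by_contra! hfreq
    exact hg (mem_UK_of_frequently_le hD hs hfreq hKC)
  refine mem_UK_of_frequently_le hD (hact.tendstoBd_act hs g) (Eventually.frequently ?_) hCK
  filter_upwards [hev] with n hn
  rw [hact.gprod_act_act]
  linarith

end IsIsometricAction

end IsometricAction

section HomogeneousSequence

variable {S : Type*} [MetricSpace S] {D : ℝ} {p : ℕ → S} {ℓ : ℕ → ℝ}

theorem GromovHyperbolic.add_le_of_homogeneous (hD : GromovHyperbolic S D)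
    (hp : ∀ n k, dist (p n) (p (n + k)) = ℓ k) (a b c : ℕ) :
    ℓ (a + b) + ℓ (b + c) ≤ max (ℓ a + ℓ c) (ℓ b + ℓ (a + b + c)) + 2 * D := by
  have h := hD.dist_add_dist_le (p 0) (p (0 + a)) (p (0 + (a + b))) (p (0 + (a + b + c)))
  rw [hp, hp, hp, ← add_assoc 0 a b, hp, ← add_assoc 0 (a + b) c, ← add_assoc 0 a b, hp,
    add_assoc (0 + a) b c, hp] at h
  exact h

theorem GromovHyperbolic.add_le_succ_of_homogeneous (hD : GromovHyperbolic S D)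
    (hp : ∀ n k, dist (p n) (p (n + k)) = ℓ k) (h₂ : ℓ 1 + 3 * D < ℓ 2) (n : ℕ) :
    ℓ n + (ℓ 2 - ℓ 1 - 2 * D) ≤ ℓ (n + 1) := by
  have hD₀ := hD.const_nonneg (p 0)
  induction n with
  | zero =>
    have hℓ₀ : ℓ 0 = 0 := (hp 0 0).symm.trans (dist_self _)
    have hℓ₂ : ℓ 2 ≤ ℓ 1 + ℓ 1 := calc
      ℓ 2 = dist (p 0) (p 2) := (hp 0 2).symm
      _ ≤ dist (p 0) (p 1) + dist (p 1) (p 2) := dist_triangle _ _ _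
      _ = ℓ 1 + ℓ 1 := congrArg₂ _ (hp 0 1) (hp 1 1)
    rw [zero_add]
    linarith
  | succ n ih =>
    have h := hD.add_le_of_homogeneous hp n 1 1
    rcases max_choice (ℓ n + ℓ 1) (ℓ 1 + ℓ (n + 1 + 1)) with hm | hm <;>
      rw [hm, one_add_one_eq_two] at h <;> linarith

theorem GromovHyperbolic.add_le_add_of_homogeneous (hD : GromovHyperbolic S D)
    (hp : ∀ n k, dist (p n) (p (n + k)) = ℓ k) (h₂ : ℓ 1 + 3 * D < ℓ 2) (n k : ℕ) :
    ℓ n + ℓ k ≤ ℓ (n + k) + (ℓ 1 + 2 * D) := by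
  have hD₀ := hD.const_nonneg (p 0)
  have hstep := hD.add_le_succ_of_homogeneous hp h₂
  cases k with
  | zero =>
    have hℓ₀ : ℓ 0 = 0 := (hp 0 0).symm.trans (dist_self _)
    have hℓ₁ : 0 ≤ ℓ 1 := hp 0 1 ▸ dist_nonneg
    rw [add_zero]
    linarith
  | succ k =>
    have h := hD.add_le_of_homogeneous hp n 1 k
    rw [add_comm 1 k, add_assoc n 1 k, add_comm 1 k] at h
    rcases max_choice (ℓ n + ℓ k) (ℓ 1 + ℓ (n + (k + 1))) with hm | hm <;>
      rw [hm] at h <;> linarith [hstep n, hstep k]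

theorem GromovHyperbolic.tendsto_atTop_of_homogeneous (hD : GromovHyperbolic S D)
    (hp : ∀ n k, dist (p n) (p (n + k)) = ℓ k) (h₂ : ℓ 1 + 3 * D < ℓ 2) :
    Tendsto ℓ atTop atTop := by
  have hpos : 0 < ℓ 2 - ℓ 1 - 2 * D := by linarith [hD.const_nonneg (p 0)]
  refine tendsto_atTop_mono (fun n => ?_) (tendsto_natCast_atTop_atTop.atTop_mul_const hpos)
  induction n with
  | zero => rw [Nat.cast_zero, zero_mul, ← hp 0 0]; exact dist_nonneg
  | succ n ih =>
    rw [Nat.cast_succ]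
    linarith [hD.add_le_succ_of_homogeneous hp h₂ n]

end HomogeneousSequence

section Loxodromic

variable {G S : Type*} [Group G] [MetricSpace S]

/-- `f` is loxodromic, in the form used here: its forward orbit escapes, and the forward and
backward orbits have Gromov products at most `b`, so that they lead to two distinct points at
infinity. -/
structure IsLoxodromicWith (act : G → S → S) (e : S) (f : G) (b : ℝ) : Prop where
  tendsto_dist : Tendsto (fun n : ℕ => dist (act (f ^ n) e) e) atTop atTop
  gprod_le : ∀ i j : ℕ, gprod e (act (f⁻¹ ^ i) e) (act (f ^ j) e) ≤ b

variable {act : G → S → S} {e : S} {f : G} {D b : ℝ}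

/-- Local-to-global principle: an orbit path with a small enough turn at one point is a
quasi-geodesic. -/
theorem exists_isLoxodromicWith (hact : IsIsometricAction act) (hD : GromovHyperbolic S D)
    (h : 2 * gprod e (act f⁻¹ e) (act f e) + 3 * D < dist (act f e) e) :
    ∃ b, IsLoxodromicWith act e f b := by
  have hp := hact.dist_act_pow_add f e
  have h₂ : dist (act (f ^ 1) e) e + 3 * D < dist (act (f ^ 2) e) e := by
    rw [pow_two, hact.dist_mul_act, pow_one]
    linarith
  refine ⟨dist (act (f ^ 1) e) e / 2 + D, ⟨hD.tendsto_atTop_of_homogeneous hp h₂, ?_⟩⟩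
  intro i j
  have hadd := hD.add_le_add_of_homogeneous hp h₂ i j
  rw [pow_add, hact.dist_mul_act, ← inv_pow] at hadd
  linarith

namespace IsLoxodromicWith

theorem inv (hact : IsIsometricAction act) (hf : IsLoxodromicWith act e f b) :
    IsLoxodromicWith act e f⁻¹ b where
  tendsto_dist := by simpa only [inv_pow, hact.dist_inv_act] using hf.tendsto_dist
  gprod_le i j := by
    rw [gprod_comm, inv_inv]
    exact hf.gprod_le j i

theorem min_dist_sub_le_gprod (hact : IsIsometricAction act) (hf : IsLoxodromicWith act e f b)
    (i j : ℕ) :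
    min (dist (act (f ^ i) e) e) (dist (act (f ^ j) e) e) - b ≤
      gprod e (act (f ^ i) e) (act (f ^ j) e) := by
  wlog hij : i ≤ j generalizing i j
  · rw [min_comm, gprod_comm]
    exact this j i (le_of_not_ge hij)
  obtain ⟨k, rfl⟩ := Nat.exists_eq_add_of_le hij
  rw [pow_add, hact.1.2, hact.gprod_act_act, ← inv_pow]
  linarith [hf.gprod_le i k,
    min_le_left (dist (act (f ^ i) e) e) (dist (act (f ^ i) (act (f ^ k) e)) e)]

theorem convToInfty (hact : IsIsometricAction act) (hf : IsLoxodromicWith act e f b) :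
    ConvToInfty e fun n : ℕ => act (f ^ n) e := by
  refine tendsto_atTop.2 fun c => eventually_atTop_prod_self'.2 ?_
  obtain ⟨N, hN⟩ := eventually_atTop.1 (tendsto_atTop.1 hf.tendsto_dist (c + b))
  exact ⟨N, fun i hi j hj => by
    linarith [hf.min_dist_sub_le_gprod hact i j, le_min (hN i hi) (hN j hj)]⟩

theorem exists_tendstoBd (hact : IsIsometricAction act) (hf : IsLoxodromicWith act e f b) :
    ∃ y, TendstoBd e (fun n : ℕ => act (f ^ n) e) y :=
  ⟨_, hf.convToInfty hact, rfl⟩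

end IsLoxodromicWith

theorem boundaryAct_eq_self_of_commute (hact : IsIsometricAction act)
    (hD : GromovHyperbolic S D) {k : G} (hk : Commute k f) {y : GBoundary S e}
    (hy : TendstoBd e (fun n : ℕ => act (f ^ n) e) y) : hact.boundaryAct e k y = y := by
  have hdist (n : ℕ) : dist (act (f ^ n) e) (act k (act (f ^ n) e)) ≤ dist e (act k e) := by
    rw [← hact.1.2 k, (hk.pow_right n).eq, hact.1.2, (hact.2 _).dist_eq]
  exact (hact.tendstoBd_act hy k).unique hD (hy.of_dist_le hdist)

namespace IsLoxodromicWith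

variable {x y : GBoundary S e}

theorem ne_of_tendstoBd (hD : GromovHyperbolic S D) (hf : IsLoxodromicWith act e f b)
    (hx : TendstoBd e (fun n : ℕ => act (f⁻¹ ^ n) e) x)
    (hy : TendstoBd e (fun n : ℕ => act (f ^ n) e) y) : x ≠ y := by
  rintro rfl
  obtain ⟨p, hp⟩ := (tendsto_atTop.1 (IsAsymptotic.of_tendstoBd hD hx hy) (b + 1)).exists
  linarith [hf.gprod_le p.1 p.2]

/-- Points away from `x` are attracted to `y`: the backward orbit of `e` eventually stays away from
them, hence the forward orbit of `e` is close to their images. -/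
theorem eventually_lt_gprodBB (hact : IsIsometricAction act) (hD : GromovHyperbolic S D)
    (hf : IsLoxodromicWith act e f b)
    (hx : TendstoBd e (fun n : ℕ => act (f⁻¹ ^ n) e) x)
    (hy : TendstoBd e (fun n : ℕ => act (f ^ n) e) y) (K₁ K₂ : ℝ) :
    ∀ᶠ n : ℕ in atTop, ∀ z, gprodBB e x z ≤ K₁ →
      (K₂ : EReal) < gprodBB e y (hact.boundaryAct e (f ^ n) z) := by
  set M₁ := K₁ + 2 * D + 1
  set M₂ := K₂ + 2 * D + 1
  filter_upwards [hx.eventually_mem_UK hD M₁, hy.eventually_mem_UK hD M₂,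
    tendsto_atTop.1 hx.tendsto_dist M₁, tendsto_atTop.1 hy.tendsto_dist M₂,
    hf.tendsto_dist.eventually_gt_atTop (M₁ + M₂ + 2 * D)] with n hnx hny hdx hdy hdist z hz
  rw [inv_pow] at hnx hdx
  have hnz : act (f ^ n)⁻¹ e ∉ UK e M₁ z := fun hmem => by
    have h := (le_gprodBB_of_mem_UK hD hnx hmem ((gprod_self e _).symm ▸ hdx)).trans hz
    rw [EReal.coe_le_coe_iff] at h
    linarith
  have h := le_gprodBB_of_mem_UK hD hny (hact.act_mem_UK_boundaryAct hD hnz hdist)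
    ((gprod_self e _).symm ▸ hdy)
  exact (EReal.coe_lt_coe (by linarith)).trans_le h

theorem eq_or_eq_of_boundaryAct_eq (hact : IsIsometricAction act) (hD : GromovHyperbolic S D)
    (hf : IsLoxodromicWith act e f b)
    (hx : TendstoBd e (fun n : ℕ => act (f⁻¹ ^ n) e) x)
    (hy : TendstoBd e (fun n : ℕ => act (f ^ n) e) y) {z : GBoundary S e}
    (hz : hact.boundaryAct e f z = z) : z = x ∨ z = y := by
  refine or_iff_not_imp_left.2 fun hzx => (eq_of_forall_lt_gprodBB fun K => ?_).symm
  have hpow (n : ℕ) : hact.boundaryAct e (f ^ n) z = z := by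
    induction n with
    | zero => rw [pow_zero, (hact.isAction_boundaryAct e).1]
    | succ n ih => rw [pow_succ, (hact.isAction_boundaryAct e).2, hz, ih]
  obtain ⟨L, hL⟩ := exists_gprodBB_le_of_ne (Ne.symm hzx)
  obtain ⟨n, hn⟩ := (hf.eventually_lt_gprodBB hact hD hx hy L K).exists
  exact hpow n ▸ hn z hL

theorem northSouthAt (hact : IsIsometricAction act) (hD : GromovHyperbolic S D)
    {ζ : ℝ} (hζ : VisualParam e ζ) (hf : IsLoxodromicWith act e f b)
    (hx : TendstoBd e (fun n : ℕ => act (f⁻¹ ^ n) e) x)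
    (hy : TendstoBd e (fun n : ℕ => act (f ^ n) e) y) :
    @NorthSouthAt G _ _ (bdTopology S e ζ) (hact.boundaryAct e) f x y := by
  let _ := bdTopology S e ζ
  refine ⟨hf.ne_of_tendstoBd hD hx hy, fun z => ⟨hf.eq_or_eq_of_boundaryAct_eq hact hD hx hy, ?_⟩,
    fun U V hU hV hxU hyV => ?_⟩
  · rintro (rfl | rfl)
    · exact boundaryAct_eq_self_of_commute hact hD (Commute.inv_right (Commute.refl f)) hx
    · exact boundaryAct_eq_self_of_commute hact hD (Commute.refl f) hy
  · obtain ⟨K₁, -, hK₁⟩ := (hasBasis_nhds_gprodBB hζ x).mem_iff.1 (hU.mem_nhds hxU)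
    obtain ⟨K₂, -, hK₂⟩ := (hasBasis_nhds_gprodBB hζ y).mem_iff.1 (hV.mem_nhds hyV)
    obtain ⟨N, hN⟩ := eventually_atTop.1 (hf.eventually_lt_gprodBB hact hD hx hy K₁ K₂)
    refine ⟨N, fun n hn => ?_⟩
    rintro _ ⟨z, hz, rfl⟩
    exact hK₂ (hN n hn.le z (not_lt.1 fun h => hz (hK₁ h)))

end IsLoxodromicWith

/-- If neither `g` nor `h` is loxodromic, then `g e` and `g⁻¹ e` lie in roughly the same direction,
and so do `h e` and `h⁻¹ e`, so that `g * h` plays ping-pong. -/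
theorem exists_isLoxodromicWith_of_gprod_le (hact : IsIsometricAction act)
    (hD : GromovHyperbolic S D) {g h : G} {L : ℝ} (hL : gprod e (act g e) (act h e) ≤ L)
    (hg : 2 * L + 6 * D < dist (act g e) e) (hh : 2 * L + 6 * D < dist (act h e) e) :
    ∃ (f : G) (b : ℝ), IsLoxodromicWith act e f b := by
  by_contra! hnot
  have hshort (f : G) : dist (act f e) e ≤ 2 * gprod e (act f e) (act f⁻¹ e) + 3 * D := by
    by_contra! hf
    obtain ⟨b, hb⟩ := exists_isLoxodromicWith hact hD (gprod_comm e (act f e) _ ▸ hf)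
    exact hnot f b hb
  have hD₀ := hD.const_nonneg e
  have hgh : gprod e (act g⁻¹ e) (act h e) ≤ L + D :=
    hD.gprod_le_of_lt hL (by linarith [hshort g])
  have hhg : gprod e (act h⁻¹ e) (act g e) ≤ L + D :=
    hD.gprod_le_of_lt (gprod_comm e (act h e) _ ▸ hL) (by linarith [hshort h])
  have hdist := hact.dist_mul_act g h e
  have hleft : gprod e (act g e) (act (g * h) e) =
      dist (act g e) e - gprod e (act g⁻¹ e) (act h e) := by
    rw [hact.1.2, hact.gprod_act_act]
  have hright : gprod e (act h⁻¹ e) (act (g * h)⁻¹ e) =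
      dist (act h e) e - gprod e (act h e) (act g⁻¹ e) := by
    rw [mul_inv_rev, hact.1.2, hact.gprod_act_act, hact.dist_inv_act, inv_inv]
  rw [gprod_comm e (act h e)] at hright
  have hmul : gprod e (act (g * h) e) (act h⁻¹ e) ≤ L + D + D :=
    hD.gprod_le_of_lt (gprod_comm e (act g e) _ ▸ hhg) (by linarith)
  have hturn : gprod e (act (g * h)⁻¹ e) (act (g * h) e) ≤ L + D + D + D :=
    hD.gprod_le_of_lt (gprod_comm e (act h⁻¹ e) _ ▸ hmul) (by linarith)
  linarith [hshort (g * h), gprod_comm e (act (g * h) e) (act (g * h)⁻¹ e)]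

theorem exists_isLoxodromicWith_of_mem_limitSet (hact : IsIsometricAction act)
    (hD : GromovHyperbolic S D) {x y : GBoundary S e} (hx : x ∈ limitSet act e)
    (hy : y ∈ limitSet act e) (hxy : x ≠ y) : ∃ (f : G) (b : ℝ), IsLoxodromicWith act e f b := by
  obtain ⟨g, hg⟩ := hact.mem_limitSet_iff.1 hx
  obtain ⟨h, hh⟩ := hact.mem_limitSet_iff.1 hy
  obtain ⟨L, hL⟩ := hg.eventually_gprod_le_of_ne hD hh hxy
  obtain ⟨n, hn, hgn, hhn⟩ := ((tendsto_atTop_diagonal.eventually hL).and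
    ((hg.tendsto_dist.eventually_gt_atTop (2 * L + 6 * D)).and
      (hh.tendsto_dist.eventually_gt_atTop (2 * L + 6 * D)))).exists
  exact exists_isLoxodromicWith_of_gprod_le hact hD hn hgn hhn

end Loxodromic

section VirtuallyCyclic

theorem finiteIndex_zpowers_zpow {G : Type*} [Group G] {k : G} (hk : (Subgroup.zpowers k).index ≠ 0)
    {j : ℤ} (hj : j ≠ 0) : (Subgroup.zpowers (k ^ j)).FiniteIndex := by
  have hfin : (Subgroup.zpowers (Multiplicative.ofAdd j)).FiniteIndex :=
    ⟨(Int.index_zmultiples j).trans_ne (Int.natAbs_ne_zero.2 hj)⟩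
  have hmap : (Subgroup.zpowers (Multiplicative.ofAdd j)).map (zpowersHom G k) =
      Subgroup.zpowers (k ^ j) := MonoidHom.map_zpowers _ _
  refine ⟨?_⟩
  rw [← hmap, Subgroup.index_map]
  exact mul_ne_zero (Subgroup.finiteIndex_of_le le_sup_left).index_ne_zero hk

theorem VirtuallyCyclic.finiteIndex_zpowers {G : Type*} [Group G] (hG : VirtuallyCyclic G) {f : G}
    (hf : ¬ IsOfFinOrder f) : (Subgroup.zpowers f).FiniteIndex := by
  obtain ⟨H, hH, hindex⟩ := hG
  obtain ⟨k, rfl⟩ := (Subgroup.isCyclic_iff_exists_zpowers_eq_top H).1 hH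
  obtain ⟨n, hn, -, hmem⟩ := Subgroup.exists_pow_mem_of_index_ne_zero hindex f
  obtain ⟨j, hj⟩ := Subgroup.mem_zpowers_iff.1 hmem
  have hj₀ : j ≠ 0 := by
    rintro rfl
    exact hf (isOfFinOrder_iff_pow_eq_one.2 ⟨n, hn, hj.symm.trans (zpow_zero k)⟩)
  have hfin := finiteIndex_zpowers_zpow hindex hj₀
  rw [hj] at hfin
  exact Subgroup.finiteIndex_of_le (Subgroup.zpowers_le.2 (Subgroup.npow_mem_zpowers f n))

variable {G S : Type*} [Group G] [MetricSpace S] {act : G → S → S} {e : S} {f : G} {D b : ℝ}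

theorem IsIsometricAction.exists_dist_le_of_finiteIndex (hact : IsIsometricAction act)
    (H : Subgroup G) [H.FiniteIndex] (e : S) :
    ∃ B, ∀ g, ∃ h ∈ H, dist (act g e) (act h e) ≤ B := by
  obtain ⟨B, hB⟩ := (Set.finite_range fun q : G ⧸ H => dist e (act q.out e)).bddAbove
  refine ⟨B, fun g => ?_⟩
  obtain ⟨h, hh⟩ := QuotientGroup.mk_out_eq_mul H g⁻¹
  refine ⟨h, h.2, ?_⟩
  calc dist (act g e) (act h e) = dist e (act (QuotientGroup.mk (s := H) g⁻¹).out e) := by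
        rw [hact.dist_act_left, hh, hact.1.2]
    _ ≤ B := hB ⟨_, rfl⟩

namespace IsLoxodromicWith

theorem not_isOfFinOrder (hact : IsIsometricAction act) (hf : IsLoxodromicWith act e f b) :
    ¬ IsOfFinOrder f := by
  intro hfin
  obtain ⟨n, hn, hpow⟩ := isOfFinOrder_iff_pow_eq_one.1 hfin
  obtain ⟨N, hN⟩ := eventually_atTop.1 (hf.tendsto_dist.eventually_gt_atTop 0)
  have h := hN (n * N) (Nat.le_mul_of_pos_left N hn)
  rw [pow_mul, hpow, one_pow, hact.1.1, dist_self] at h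
  exact h.false

theorem eq_of_frequently_pow (hact : IsIsometricAction act) (hD : GromovHyperbolic S D)
    (hf : IsLoxodromicWith act e f b) {y z : GBoundary S e}
    (hy : TendstoBd e (fun n : ℕ => act (f ^ n) e) y) {t : ℕ → S} (ht : TendstoBd e t z)
    (h : ∃ᶠ n in atTop, ∃ k : ℕ, t n = act (f ^ k) e) : z = y := by
  refine ht.eq_of_frequently hD hy fun c => ?_
  have hfar : ∃ᶠ n in atTop, (∃ k : ℕ, t n = act (f ^ k) e) ∧ c + b ≤ dist (t n) e :=
    h.and_eventually (tendsto_atTop.1 ht.tendsto_dist _)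
  have hfar' := (tendsto_atTop.1 hf.tendsto_dist (c + b)).frequently
  rw [← prod_atTop_atTop_eq]
  refine (frequently_prod_and.2 ⟨hfar, hfar'⟩).mono ?_
  rintro ⟨n, j⟩ ⟨⟨⟨k, hk⟩, hn⟩, hj⟩
  rw [hk] at hn ⊢
  linarith [hf.min_dist_sub_le_gprod hact k j, le_min hn hj]

theorem eq_or_eq_of_mem_limitSet (hact : IsIsometricAction act) (hD : GromovHyperbolic S D)
    (hf : IsLoxodromicWith act e f b) [(Subgroup.zpowers f).FiniteIndex] {x y z : GBoundary S e}
    (hx : TendstoBd e (fun n : ℕ => act (f⁻¹ ^ n) e) x)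
    (hy : TendstoBd e (fun n : ℕ => act (f ^ n) e) y) (hz : z ∈ limitSet act e) :
    z = x ∨ z = y := by
  obtain ⟨g, hg⟩ := hact.mem_limitSet_iff.1 hz
  obtain ⟨B, hB⟩ := hact.exists_dist_le_of_finiteIndex (Subgroup.zpowers f) e
  choose h hh hdist using fun n => hB (g n)
  have ht : TendstoBd e (fun n => act (h n) e) z := hg.of_dist_le hdist
  have hsign (n : ℕ) : (∃ k : ℕ, act (h n) e = act (f⁻¹ ^ k) e) ∨
      ∃ k : ℕ, act (h n) e = act (f ^ k) e := by
    obtain ⟨m, hm⟩ := Subgroup.mem_zpowers_iff.1 (hh n)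
    obtain ⟨k, rfl | rfl⟩ := m.eq_nat_or_neg
    · exact .inr ⟨k, by rw [← hm, zpow_natCast]⟩
    · exact .inl ⟨k, by rw [← hm, zpow_neg, zpow_natCast, inv_pow]⟩
  have hfreq := Frequently.of_forall (f := atTop) hsign
  refine (frequently_or_distrib.1 hfreq).imp ?_ ?_
  · exact (hf.inv hact).eq_of_frequently_pow hact hD hx ht
  · exact hf.eq_of_frequently_pow hact hD hy ht

theorem not_virtuallyCyclic (hact : IsIsometricAction act) (hD : GromovHyperbolic S D)
    (hf : IsLoxodromicWith act e f b) (hne : NonelemAction act e) : ¬ VirtuallyCyclic G := by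
  intro hG
  have := hG.finiteIndex_zpowers (hf.not_isOfFinOrder hact)
  obtain ⟨x, hx⟩ := (hf.inv hact).exists_tendstoBd hact
  obtain ⟨y, hy⟩ := hf.exists_tendstoBd hact
  obtain ⟨p, q, r, hp, hq, hr, hpq, hqr, hpr⟩ := hne
  rcases hf.eq_or_eq_of_mem_limitSet hact hD hx hy hp with rfl | rfl <;>
    rcases hf.eq_or_eq_of_mem_limitSet hact hD hx hy hq with rfl | rfl <;>
    rcases hf.eq_or_eq_of_mem_limitSet hact hD hx hy hr with rfl | rfl <;>
    contradiction

end IsLoxodromicWith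

end VirtuallyCyclic

section Acylindricity

variable {G S : Type*} [Group G] [MetricSpace S] {act : G → S → S} {e : S} {D : ℝ}

/-- Acylindricity without the uniform bound on the number of elements that move two distant points
by at most `ε`. -/
def NonuniformlyAcylindrical (act : G → S → S) : Prop :=
  ∀ ε : ℝ, 0 < ε → ∃ R : ℝ, ∀ x y : S, R ≤ dist x y →
    {g : G | dist x (act g x) ≤ ε ∧ dist y (act g y) ≤ ε}.Finite

theorem AcylindricalAction.nonuniformlyAcylindrical (h : AcylindricalAction act) :
    NonuniformlyAcylindrical act := fun ε hε => by
  obtain ⟨R, N, -, -, hR⟩ := h ε hε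
  exact ⟨R, fun x y hxy => (hR x y hxy).1⟩

namespace NonuniformlyAcylindrical

theorem exists_finite_dist_le (hacyl : NonuniformlyAcylindrical act) (hact : IsIsometricAction act)
    {E : ℝ} (hE : 0 < E) :
    ∃ R : ℝ, ∀ c₁ c₂ : S, R ≤ dist c₁ c₂ → ∀ p q : S,
      {g : G | dist (act g p) c₁ ≤ E ∧ dist (act g q) c₂ ≤ E}.Finite := by
  obtain ⟨R, hR⟩ := hacyl (E + E) (add_pos hE hE)
  refine ⟨R, fun c₁ c₂ hc p q => ?_⟩
  rcases Set.eq_empty_or_nonempty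
    {g : G | dist (act g p) c₁ ≤ E ∧ dist (act g q) c₂ ≤ E} with hempty | ⟨g₀, hp₀, hq₀⟩
  · rw [hempty]
    exact Set.finite_empty
  · have hmove {g : G} {z c : S} (h₀ : dist (act g₀ z) c ≤ E) (h : dist (act g z) c ≤ E) :
        dist c (act (g * g₀⁻¹) c) ≤ E + E := calc
      _ ≤ dist (act g z) c + dist (act g z) (act (g * g₀⁻¹) c) := dist_triangle_left _ _ _
      _ = dist (act g z) c + dist (act g₀ z) c := by
        rw [hact.1.2, (hact.2 g).dist_eq, hact.dist_act_left g₀]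
      _ ≤ E + E := add_le_add h h₀
    refine Set.Finite.of_finite_image ((hR c₁ c₂ hc).subset ?_) (mul_left_injective g₀⁻¹).injOn
    rintro _ ⟨g, ⟨hp, hq⟩, rfl⟩
    exact ⟨hmove hp₀ hp, hmove hq₀ hq⟩

/-- Translates of a geodesic `[x, y]` that pass close to both `c₁` and `c₂` bring two of finitely
many points of `[x, y]` close to `c₁` and `c₂`. -/
theorem exists_finite_gprod_le (hacyl : NonuniformlyAcylindrical act)
    (hact : IsIsometricAction act) (hgeo : GeodesicSpace S) (hD : GromovHyperbolic S D) {C : ℝ}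
    (hC : 0 ≤ C) :
    ∃ R : ℝ, ∀ c₁ c₂ : S, R ≤ dist c₁ c₂ → ∀ x y : S,
      {g : G | gprod c₁ (act g x) (act g y) ≤ C ∧
        gprod c₂ (act g x) (act g y) ≤ C}.Finite := by
  obtain ⟨R, hR⟩ := hacyl.exists_finite_dist_le hact (E := C + 2 * |D| + 1) (by positivity)
  refine ⟨R, fun c₁ c₂ hc x y => ?_⟩
  obtain ⟨Γ, hΓ⟩ := hgeo x y
  obtain ⟨F, -, hF, hcover⟩ := hΓ.isCompact.finite_cover_balls one_pos
  have hnear {g : G} {c : S} (h : gprod c (act g x) (act g y) ≤ C) :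
      ∃ p ∈ F, dist (act g p) c ≤ C + 2 * |D| + 1 := by
    rw [← hact.act_inv_act g c, gprod_map_of_isometry (hact.2 g)] at h
    obtain ⟨q, hq, hqc⟩ := hD.exists_mem_dist_le hΓ (act g⁻¹ c)
    obtain ⟨p, hp, hpq⟩ := Set.mem_iUnion₂.1 (hcover hq)
    refine ⟨p, hp, ?_⟩
    rw [hact.dist_act_left]
    linarith [dist_triangle_left p (act g⁻¹ c) q, Metric.mem_ball.1 hpq, le_abs_self D]
  refine (hF.biUnion fun p _ => hF.biUnion fun q _ => hR c₁ c₂ hc p q).subset ?_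
  rintro g ⟨h₁, h₂⟩
  obtain ⟨p, hp, hpc⟩ := hnear h₁
  obtain ⟨q, hq, hqc⟩ := hnear h₂
  exact Set.mem_biUnion hp (Set.mem_biUnion hq ⟨hpc, hqc⟩)

end NonuniformlyAcylindrical

theorem exists_mem_UK_dist_eq (hgeo : GeodesicSpace S) (hD : GromovHyperbolic S D)
    (x : GBoundary S e) {K r : ℝ} (hr : 0 ≤ r) (hK : K < r - 2 * D) :
    ∃ c ∈ UK e K x, dist c e = r := by
  obtain ⟨s, hs⟩ := exists_tendstoBd x
  obtain ⟨N, hN⟩ := eventually_atTop_prod_self'.1 (tendsto_atTop.1 hs.1 r)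
  obtain ⟨Γ, hΓ⟩ := hgeo e (s N)
  have hrN : r ≤ dist e (s N) :=
    (hN N le_rfl N le_rfl).trans_eq ((gprod_self e _).trans (dist_comm _ _))
  obtain ⟨c, hc, hcr⟩ := hΓ.exists_mem_dist_eq hr hrN
  have hcN : r ≤ gprod e c (s N) := by
    unfold gprod
    linarith [hΓ.dist_add_dist hc, dist_comm c e, dist_comm e (s N)]
  refine ⟨c, mem_UK_of_frequently_le hD hs (c := r - D) (Eventually.frequently ?_) (by linarith),
    (dist_comm c e).trans hcr⟩
  filter_upwards [eventually_ge_atTop N] with n hn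
  exact hD.le_gprod_trans hcN (hN N le_rfl n hn)

theorem gprod_le_of_mem_UK (hD : GromovHyperbolic S D) {x y : GBoundary S e} {L K : ℝ}
    (hxy : gprodBB e x y ≤ L) (hK : L + 2 * D < K) {a b : S} (ha : a ∈ UK e K x)
    (hb : b ∈ UK e K y) : gprod e a b ≤ L + 2 * D := by
  by_contra! hab
  obtain ⟨k, hk, hkab⟩ := exists_between (lt_min hK hab)
  have hkK := hkab.trans_le (min_le_left _ _)
  have h := (le_gprodBB_of_mem_UK hD (UK_antitone _ hkK.le ha) (UK_antitone _ hkK.le hb)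
    (hkab.trans_le (min_le_right _ _)).le).trans hxy
  rw [EReal.coe_le_coe_iff] at h
  linarith

/-- Geodesics from near `x` to near `y` pass close to any point `c` near `x` whose distance from `e`
is about `K`. -/
theorem gprod_le_of_mem_UK_of_dist_le (hD : GromovHyperbolic S D) {x y : GBoundary S e} {L K r : ℝ}
    (hxy : gprodBB e x y ≤ L) (hK : L + 2 * D < K) {a b c : S} (ha : a ∈ UK e K x)
    (hb : b ∈ UK e K y) (hc : c ∈ UK e K x) (hcr : dist c e ≤ r) :
    gprod c a b ≤ r - K + L + 3 * D := by
  have hab := gprod_le_of_mem_UK hD hxy hK ha hb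
  have hca := le_gprod_of_mem_UK hD hc ha
  linarith [gprod_le_gprod_add_gprod c e a b, gprod_add_gprod_swap e c a]

theorem exists_finite_mem_UK (hgeo : GeodesicSpace S) (hD : GromovHyperbolic S D)
    (hact : IsIsometricAction act) (hacyl : NonuniformlyAcylindrical act) {u v : GBoundary S e}
    (huv : u ≠ v) :
    ∃ K : ℝ, ∀ x y : S, {g : G | act g x ∈ UK e K u ∧ act g y ∈ UK e K v}.Finite := by
  have hD₀ := hD.const_nonneg e
  obtain ⟨L, hL⟩ := exists_gprodBB_le_of_ne huv
  have hL₀ : 0 ≤ L := by exact_mod_cast (gprodBB_nonneg u v).trans hL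
  set C := L + 5 * D + 1
  obtain ⟨R, hR⟩ := hacyl.exists_finite_gprod_le hact hgeo hD (C := C) (by positivity)
  set K := L + 2 * D + 1 + |R|
  have hK : L + 2 * D < K := by linarith [abs_nonneg R]
  set r := K + 2 * D + 1
  obtain ⟨c₁, hc₁, hr₁⟩ := exists_mem_UK_dist_eq hgeo hD u (K := K) (r := r) (by positivity)
    (by linarith)
  obtain ⟨c₂, hc₂, hr₂⟩ := exists_mem_UK_dist_eq hgeo hD v (K := K) (r := r) (by positivity)
    (by linarith)
  have hc : R ≤ dist c₁ c₂ := by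
    have h := gprod_le_of_mem_UK hD hL hK hc₁ hc₂
    unfold gprod at h
    linarith [le_abs_self R, abs_nonneg R]
  refine ⟨K, fun x y => (hR c₁ c₂ hc x y).subset ?_⟩
  rintro g ⟨hx, hy⟩
  have h₁ := gprod_le_of_mem_UK_of_dist_le hD hL hK hx hy hc₁ hr₁.le
  have h₂ := gprod_le_of_mem_UK_of_dist_le hD (gprodBB_comm u v ▸ hL) hK hy hx hc₂ hr₂.le
  rw [gprod_comm] at h₂
  exact ⟨by linarith, by linarith⟩

end Acylindricity

section CoarseCenter

variable {G S : Type*} [Group G] [MetricSpace S] {act : G → S → S} {e : S} {C D : ℝ}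

/-- `w` lies, up to an error `C`, on geodesics joining the terms of two sequences that tend to the
boundary points `x` and `y`; it stands for a point of a bi-infinite geodesic from `x` to `y`, which
need not exist in a space that is not proper. -/
def IsCoarseCenter (C : ℝ) (w : S) (x y : GBoundary S e) : Prop :=
  ∃ s t : ℕ → S, TendstoBd e s x ∧ TendstoBd e t y ∧ ∀ᶠ n in atTop, gprod w (s n) (t n) ≤ C

namespace IsCoarseCenter

variable {w : S} {x y : GBoundary S e}

theorem map_act (hact : IsIsometricAction act) (g : G) (hw : IsCoarseCenter C w x y) :
    IsCoarseCenter C (act g w) (hact.boundaryAct e g x) (hact.boundaryAct e g y) := by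
  obtain ⟨s, t, hs, ht, hst⟩ := hw
  refine ⟨_, _, hact.tendstoBd_act hs g, hact.tendstoBd_act ht g, ?_⟩
  simpa only [gprod_map_of_isometry (hact.2 g)] using hst

theorem mem_UK (hD : GromovHyperbolic S D) (hw : IsCoarseCenter C w x y) {u : GBoundary S e}
    {K K' : ℝ} (hx : (K : EReal) < gprodBB e u x) (hy : (K : EReal) < gprodBB e u y)
    (hK' : K' < K - C - 3 * D) : w ∈ UK e K' u := by
  obtain ⟨s, t, hs, ht, hst⟩ := hw
  obtain ⟨z, hz⟩ := exists_tendstoBd u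
  have hzs := tendsto_atTop_diagonal.eventually (eventually_lt_gprod_of_lt_gprodBB hx hz hs)
  have hzt := tendsto_atTop_diagonal.eventually (eventually_lt_gprod_of_lt_gprodBB hy hz ht)
  refine mem_UK_of_frequently_le hD hz (c := K - C - 2 * D) (Eventually.frequently ?_)
    (by linarith)
  filter_upwards [hst, hzs, hzt] with n hn hs ht
  have hst := hD.le_gprod_trans (gprod_comm e (z n) (s n) ▸ hs.le) ht.le
  have hws : K - C - D ≤ gprod e w (s n) := by
    linarith [gprod_le_gprod_add_gprod e w (s n) (t n)]
  have hsz : K - C - D ≤ gprod e (s n) (z n) := by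
    rw [gprod_comm]
    linarith [hD.const_nonneg e, gprod_nonneg w (s n) (t n)]
  linarith [hD.le_gprod_trans hws hsz]

end IsCoarseCenter

theorem eventually_le_gprod_of_mem_UK_of_lt_gprodBB (hD : GromovHyperbolic S D)
    {x y : GBoundary S e} {K : ℝ} {a : S} {t : ℕ → S} (ha : a ∈ UK e K x)
    (hxy : (K : EReal) < gprodBB e x y) (ht : TendstoBd e t y) :
    ∀ᶠ n in atTop, K - D ≤ gprod e a (t n) := by
  obtain ⟨s, hs⟩ := exists_tendstoBd x
  filter_upwards [eventually_lt_gprod_of_mem_UK ha hs,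
    tendsto_atTop_diagonal.eventually (eventually_lt_gprod_of_lt_gprodBB hxy hs ht)] with n hn hst
  exact hD.le_gprod_trans hn.le hst.le

/-- Any point of a geodesic from near `x` to near `y` serves, provided that it is close to `e`. -/
theorem exists_isCoarseCenter (hgeo : GeodesicSpace S) (hD : GromovHyperbolic S D)
    {x y : GBoundary S e} (hxy : x ≠ y) :
    ∃ (w : S) (K : ℝ), ∀ x' y' : GBoundary S e, (K : EReal) < gprodBB e x x' →
      (K : EReal) < gprodBB e y y' → IsCoarseCenter (2 * D + 1) w x' y' := by
  obtain ⟨s, hs⟩ := exists_tendstoBd x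
  obtain ⟨t, ht⟩ := exists_tendstoBd y
  obtain ⟨L, hL⟩ := hs.eventually_gprod_le_of_ne hD ht hxy
  set K := L + 5 * D + 1
  obtain ⟨n, ha, hb, hab⟩ := ((hs.eventually_mem_UK hD K).and ((ht.eventually_mem_UK hD K).and
    (tendsto_atTop_diagonal.eventually hL))).exists
  obtain ⟨Γ, hΓ⟩ := hgeo (s n) (t n)
  obtain ⟨w, hw, hwe⟩ := hD.exists_mem_dist_le hΓ e
  have hwst : gprod w (s n) (t n) = 0 := by
    unfold gprod
    linarith [hΓ.dist_add_dist hw, dist_comm w (t n)]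
  refine ⟨w, K, fun x' y' hx hy => ?_⟩
  obtain ⟨s', hs'⟩ := exists_tendstoBd x'
  obtain ⟨t', ht'⟩ := exists_tendstoBd y'
  refine ⟨s', t', hs', ht', ?_⟩
  filter_upwards [eventually_le_gprod_of_mem_UK_of_lt_gprodBB hD ha hx hs',
    eventually_le_gprod_of_mem_UK_of_lt_gprodBB hD hb hy ht'] with m hsm htm
  have hws : 2 * D + 1 ≤ gprod w (s n) (s' m) := by
    linarith [gprod_le_gprod_add_dist e w (s n) (s' m)]
  have hwt : 2 * D + 1 ≤ gprod w (t' m) (t n) := by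
    rw [gprod_comm]
    linarith [gprod_le_gprod_add_dist e w (t n) (t' m)]
  by_contra! hst
  linarith [hD.le_gprod_trans₂ hws hst.le hwt]

end CoarseCenter

section ConditionC

theorem conditionC_of_nhds {G M : Type*} [TopologicalSpace M] {act : G → M → M}
    (h : ∀ u v : M, u ≠ v → ∃ U ∈ 𝓝 u, ∃ V ∈ 𝓝 v, ∀ a b : M × M, a.1 ≠ a.2 → b.1 ≠ b.2 →
      ∃ A ∈ 𝓝 a, ∃ B ∈ 𝓝 b, {g : G | (∃ p ∈ A, act g p.1 ∈ U ∧ act g p.2 ∈ U) ∧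
        ∃ p ∈ B, act g p.1 ∈ V ∧ act g p.2 ∈ V}.Finite) :
    ConditionC act := by
  rintro ⟨u, u'⟩ ⟨v, v'⟩ (rfl : u = u') (rfl : v = v') huv
  obtain ⟨U, hU, V, hV, hUV⟩ := h u v fun h => huv (h ▸ rfl)
  refine ⟨interior U ×ˢ interior U, interior V ×ˢ interior V,
    isOpen_interior.prod isOpen_interior, isOpen_interior.prod isOpen_interior,
    ⟨mem_interior_iff_mem_nhds.2 hU, mem_interior_iff_mem_nhds.2 hU⟩,
    ⟨mem_interior_iff_mem_nhds.2 hV, mem_interior_iff_mem_nhds.2 hV⟩, fun a b ha hb _ => ?_⟩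
  obtain ⟨A, hA, B, hB, hfin⟩ := hUV a b ha hb
  refine ⟨interior A, interior B, isOpen_interior, isOpen_interior,
    mem_interior_iff_mem_nhds.2 hA, mem_interior_iff_mem_nhds.2 hB, hfin.subset ?_⟩
  rintro g ⟨⟨_, ⟨p, hp, rfl⟩, hpU⟩, ⟨_, ⟨q, hq, rfl⟩, hqV⟩⟩
  exact ⟨⟨p, interior_subset hp, interior_subset hpU.1, interior_subset hpU.2⟩,
    q, interior_subset hq, interior_subset hqV.1, interior_subset hqV.2⟩

variable {G S : Type*} [Group G] [MetricSpace S] {act : G → S → S} {e : S} {D ζ : ℝ}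

theorem conditionC_boundaryAct (hgeo : GeodesicSpace S) (hD : GromovHyperbolic S D)
    (hact : IsIsometricAction act) (hacyl : NonuniformlyAcylindrical act)
    (hζ : VisualParam e ζ) :
    @ConditionC G (GBoundary S e) (bdTopology S e ζ) (hact.boundaryAct e) := by
  let _ := bdTopology S e ζ
  refine conditionC_of_nhds fun u v huv => ?_
  have hcenter {a : GBoundary S e × GBoundary S e} (ha : a.1 ≠ a.2) :
      ∃ w, ∃ A ∈ 𝓝 a, ∀ p ∈ A, IsCoarseCenter (2 * D + 1) w p.1 p.2 := by
    obtain ⟨w, K, hw⟩ := exists_isCoarseCenter hgeo hD ha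
    exact ⟨w, _, prod_mem_nhds ((hasBasis_nhds_gprodBB hζ a.1).mem_of_mem (i := K) trivial)
      ((hasBasis_nhds_gprodBB hζ a.2).mem_of_mem (i := K) trivial), fun p hp => hw _ _ hp.1 hp.2⟩
  obtain ⟨K, hK⟩ := exists_finite_mem_UK hgeo hD hact hacyl huv
  set K' := K + 5 * D + 2
  refine ⟨_, (hasBasis_nhds_gprodBB hζ u).mem_of_mem (i := K') trivial,
    _, (hasBasis_nhds_gprodBB hζ v).mem_of_mem (i := K') trivial, fun a b ha hb => ?_⟩
  obtain ⟨w, A, hA, hwA⟩ := hcenter ha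
  obtain ⟨z, B, hB, hzB⟩ := hcenter hb
  refine ⟨A, hA, B, hB, (hK w z).subset ?_⟩
  rintro g ⟨⟨p, hp, hp₁, hp₂⟩, q, hq, hq₁, hq₂⟩
  exact ⟨((hwA p hp).map_act hact g).mem_UK hD hp₁ hp₂ (by linarith),
    ((hzB q hq).map_act hact g).mem_UK hD hq₁ hq₂ (by linarith)⟩

end ConditionC

theorem statement3_general {G S : Type*} [Group G] [MetricSpace S] {δ : ℝ}
    (hgeo : GeodesicSpace S) (hhyp : DeltaHyperbolic S δ) {act : G → S → S}
    (hact : IsIsometricAction act) (hacyl : NonuniformlyAcylindrical act) {e : S}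
    (hne : NonelemAction act e) {ζ : ℝ} (hζ : VisualParam e ζ) :
    ¬ VirtuallyCyclic G ∧
    @CompletelyHausdorff (GBoundary S e) (bdTopology S e ζ) ∧
    (∃ a b c : GBoundary S e, a ≠ b ∧ b ≠ c ∧ a ≠ c) ∧
    (∃ g : G, @NorthSouth G (GBoundary S e) _ (bdTopology S e ζ) (hact.boundaryAct e) g) ∧
    @ConditionC G (GBoundary S e) (bdTopology S e ζ) (hact.boundaryAct e) := by
  have hD := hhyp.gromovHyperbolic hgeo
  have ⟨p, q, r, hp, hq, _, hpq, hqr, hpr⟩ := hne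
  obtain ⟨f, b, hf⟩ := exists_isLoxodromicWith_of_mem_limitSet hact hD hp hq hpq
  obtain ⟨x, hx⟩ := (hf.inv hact).exists_tendstoBd hact
  obtain ⟨y, hy⟩ := hf.exists_tendstoBd hact
  exact ⟨hf.not_virtuallyCyclic hact hD hne, completelyHausdorff_bdTopology hζ,
    ⟨p, q, r, hpq, hqr, hpr⟩, ⟨f, x, y, hf.northSouthAt hact hD hζ hx hy⟩,
    conditionC_boundaryAct hgeo hD hact hacyl hζ⟩

/-- If `G` acts non-elementarily, acylindrically and isometrically on a
geodesic `δ`-hyperbolic space `S`, then `G` is not virtually cyclic, the Gromov boundary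
`∂S` (with the visual topology) is completely Hausdorff with at least 3 points, some
element of `G` has north–south dynamics on `∂S`, and the induced action satisfies (C). -/
theorem statement3 {G S : Type*} [Group G] [MetricSpace S] (δ : ℝ) (hδ : 0 ≤ δ)
    (hgeo : GeodesicSpace S) (hhyp : DeltaHyperbolic S δ)
    {act : G → S → S} (hact : IsIsometricAction act)
    (hacyl : AcylindricalAction act) (e : S) (hne : NonelemAction act e)
    (ζ : ℝ) (hζ : VisualParam e ζ) :
    ¬ VirtuallyCyclic G ∧
    @CompletelyHausdorff (GBoundary S e) (bdTopology S e ζ) ∧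
    (∃ a b c : GBoundary S e, a ≠ b ∧ b ≠ c ∧ a ≠ c) ∧
    (∃ g : G, @NorthSouth G (GBoundary S e) _ (bdTopology S e ζ)
      (fun g => bdMap e (act g) (hact.2 g)) g) ∧
    @ConditionC G (GBoundary S e) (bdTopology S e ζ)
      (fun g => bdMap e (act g) (hact.2 g)) := by
  exact statement3_general hgeo hhyp hact hacyl.nonuniformlyAcylindrical hne hζ
end

section
/- Every convergence action of an infinite group G on an infinite compact metrizable topological space M satisfies condition (C). -/
/-- The space of distinct triples of points of `M`. -/
abbrev Theta3 (M : Type*) := {p : M × M × M // p.1 ≠ p.2.1 ∧ p.2.1 ≠ p.2.2 ∧ p.1 ≠ p.2.2}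

/-- The diagonal action of `G` on the space of distinct triples. -/
def theta3Map {G M : Type*} [Group G] {act : G → M → M} (hact : IsAction act) (g : G)
    (p : Theta3 M) : Theta3 M :=
  ⟨(act g p.1.1, act g p.1.2.1, act g p.1.2.2),
    fun h => p.2.1 (hact.injective g h),
    fun h => p.2.2.1 (hact.injective g h),
    fun h => p.2.2.2 (hact.injective g h)⟩

/-- A convergence action: the diagonal action on the space of distinct triples is
properly discontinuous. -/
def ConvergenceAction {G M : Type*} [Group G] [TopologicalSpace M] {act : G → M → M}
    (hact : IsAction act) : Prop :=
  ∀ K : Set (Theta3 M), IsCompact K → {g : G | (theta3Map hact g '' K ∩ K).Nonempty}.Finite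

/-- An elementary action: `G` preserves setwise a nonempty subset of `M` with at most
two elements. -/
def ElementaryAction {G M : Type*} [Group G] (act : G → M → M) : Prop :=
  ∃ P : Set M, P.Nonempty ∧ P.ncard ≤ 2 ∧ ∀ g : G, act g '' P = P

open Filter Topology

section Matching

variable {X Y : Type*} {L : X → Y → Prop}

/-- The relation `L`, seen as a bipartite graph, has no matching of size three. The endpoints of a
matching are encoded as two distinct triples. -/
def NoThreeMatching (L : X → Y → Prop) : Prop :=
  ∀ (x : Theta3 X) (y : Theta3 Y), L x.1.1 y.1.1 → L x.1.2.1 y.1.2.1 → ¬L x.1.2.2 y.1.2.2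

namespace NoThreeMatching

theorem exists_infinite_setOf_rel [Infinite Y] (hL : NoThreeMatching L)
    (hright : Relator.RightTotal L) {x₁ x₂ : X} {y₁ y₂ : Y} (hx : x₁ ≠ x₂) (hy : y₁ ≠ y₂)
    (h₁ : L x₁ y₁) (h₂ : L x₂ y₂) : ∃ x, {y | L x y}.Infinite := by
  by_contra! hfin
  obtain ⟨y, hy'⟩ := (((hfin x₁).union (hfin x₂)).union (Set.toFinite {y₁, y₂})).exists_notMem
  simp only [Set.mem_union, Set.mem_ofPred_eq, Set.mem_insert_iff, Set.mem_singleton_iff,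
    not_or] at hy'
  obtain ⟨⟨hx₁y, hx₂y⟩, hyy₁, hyy₂⟩ := hy'
  obtain ⟨x, hxy⟩ := hright y
  have hx₁ : x₁ ≠ x := fun h => hx₁y (h ▸ hxy)
  have hx₂ : x₂ ≠ x := fun h => hx₂y (h ▸ hxy)
  exact hL ⟨(x₁, x₂, x), hx, hx₂, hx₁⟩ ⟨(y₁, y₂, y), hy, Ne.symm hyy₂, Ne.symm hyy₁⟩ h₁ h₂ hxy

theorem eq_of_infinite_setOf_rel (hL : NoThreeMatching L) {d x₁ x₂ : X} {y₁ y₂ : Y}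
    (hd : {y | L d y}.Infinite) (hx₁ : x₁ ≠ d) (hx₂ : x₂ ≠ d) (hx : x₁ ≠ x₂)
    (h₁ : L x₁ y₁) (h₂ : L x₂ y₂) : y₁ = y₂ := by
  by_contra hy
  obtain ⟨y, hdy, hy'⟩ := hd.exists_notMem_finite (Set.toFinite {y₁, y₂})
  simp only [Set.mem_insert_iff, Set.mem_singleton_iff, not_or] at hy'
  exact hL ⟨(x₁, x₂, d), hx, hx₂, hx₁⟩ ⟨(y₁, y₂, y), hy, Ne.symm hy'.2, Ne.symm hy'.1⟩ h₁ h₂ hdy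

theorem exists_forall_ne_eq [Infinite X] [Infinite Y] (hL : NoThreeMatching L)
    (hleft : Relator.LeftTotal L) (hright : Relator.RightTotal L) {x₁ x₂ : X} {y₁ y₂ : Y}
    (hx : x₁ ≠ x₂) (hy : y₁ ≠ y₂) (h₁ : L x₁ y₁) (h₂ : L x₂ y₂) :
    ∃ d c, ∀ x ≠ d, ∀ y, L x y → y = c := by
  obtain ⟨d, hd⟩ := hL.exists_infinite_setOf_rel hright hx hy h₁ h₂
  obtain ⟨e, hed⟩ := exists_ne d
  obtain ⟨c, hec⟩ := hleft e
  have eq_c_of_ne : ∀ x ≠ d, x ≠ e → ∀ y, L x y → y = c := fun x hxd hxe y hxy =>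
    hL.eq_of_infinite_setOf_rel hd hxd hed hxe hxy hec
  refine ⟨d, c, fun x hxd y hxy => ?_⟩
  obtain rfl | hxe := eq_or_ne x e
  · -- `x = e` might have partners besides `c`; a third point `f` rules them out.
    obtain ⟨f, hf⟩ := (Set.toFinite {d, x}).exists_notMem
    simp only [Set.mem_insert_iff, Set.mem_singleton_iff, not_or] at hf
    obtain ⟨c', hfc'⟩ := hleft f
    calc y = c' := hL.eq_of_infinite_setOf_rel hd hxd hf.1 (Ne.symm hf.2) hxy hfc'
      _ = c := eq_c_of_ne f hf.1 hf.2 c' hfc'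
  · exact eq_c_of_ne x hxd hxe y hxy

theorem not_disjoint_of_nontrivial [Infinite X] [Infinite Y] (hL : NoThreeMatching L)
    (hleft : Relator.LeftTotal L) (hright : Relator.RightTotal L) {C D : Set Y}
    (hC : {x | ∃ y ∈ C, L x y}.Nontrivial) (hD : {x | ∃ y ∈ D, L x y}.Nontrivial) :
    ¬Disjoint C D := by
  intro hCD
  obtain ⟨x₂, y₂, hy₂, h₂⟩ := hD.nonempty
  obtain ⟨x₁, ⟨y₁, hy₁, h₁⟩, hx⟩ := hC.exists_ne x₂
  obtain ⟨d, c, hdc⟩ := hL.exists_forall_ne_eq hleft hright hx (hCD.ne_of_mem hy₁ hy₂) h₁ h₂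
  have mem_of_nontrivial : ∀ E : Set Y, {x | ∃ y ∈ E, L x y}.Nontrivial → c ∈ E := by
    intro E hE
    obtain ⟨x, ⟨y, hy, hxy⟩, hxd⟩ := hE.exists_ne d
    exact hdc x hxd y hxy ▸ hy
  exact hCD.ne_of_mem (mem_of_nontrivial C hC) (mem_of_nontrivial D hD) rfl

end NoThreeMatching

end Matching

section LimRel

variable {T X Y : Type*} [TopologicalSpace X] [TopologicalSpace Y] {φ : T → X → Y}

/-- The limit relation of a family of maps `φ t` along a filter `l`: the points `x` and `y` are
related when some moving point `z t` tends to `x` while its image `φ t (z t)` tends to `y`. It plays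
the role of the limit of the graphs of the maps `φ t`. -/
def LimRel (φ : T → X → Y) (l : Filter T) (x : X) (y : Y) : Prop :=
  ∃ z : T → X, Tendsto z l (𝓝 x) ∧ Tendsto (fun t => φ t (z t)) l (𝓝 y)

theorem exists_tendsto_ultrafilter [CompactSpace X] (W : Ultrafilter T) (f : T → X) :
    ∃ x, Tendsto f W (𝓝 x) :=
  ⟨(W.map f).lim, (W.map f).le_nhds_lim⟩

theorem limRel_leftTotal [CompactSpace Y] (W : Ultrafilter T) :
    Relator.LeftTotal (LimRel φ W) := fun x =>
  (exists_tendsto_ultrafilter W fun t => φ t x).imp fun _ hy => ⟨fun _ => x, tendsto_const_nhds, hy⟩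

theorem limRel_rightTotal [CompactSpace X] (hφ : ∀ t, Function.Surjective (φ t))
    (W : Ultrafilter T) : Relator.RightTotal (LimRel φ W) := by
  intro y
  choose z hz using fun t => hφ t y
  obtain ⟨x, hx⟩ := exists_tendsto_ultrafilter W z
  exact ⟨x, z, hx, by simpa only [hz] using tendsto_const_nhds⟩

theorem exists_mem_closure_limRel [CompactSpace Y] {W : Ultrafilter T} {z : T → X} {x : X}
    {C : Set Y} (hz : Tendsto z W (𝓝 x)) (hC : ∀ᶠ t in W, φ t (z t) ∈ C) :
    ∃ y ∈ closure C, LimRel φ W x y := by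
  obtain ⟨y, hy⟩ := exists_tendsto_ultrafilter W fun t => φ t (z t)
  exact ⟨y, mem_closure_of_tendsto hy hC, z, hz, hy⟩

end LimRel

theorem IsAction.surjective {G M : Type*} [Group G] {act : G → M → M}
    (hact : IsAction act) (g : G) : Function.Surjective (act g) :=
  fun x => ⟨act g⁻¹ x, by rw [← hact.2, mul_inv_cancel, hact.1]⟩

theorem isOpen_setOf_distinct_triple (M : Type*) [TopologicalSpace M] [T2Space M] :
    IsOpen {p : M × M × M | p.1 ≠ p.2.1 ∧ p.2.1 ≠ p.2.2 ∧ p.1 ≠ p.2.2} :=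
  (isOpen_ne_fun (by fun_prop) (by fun_prop)).inter
    ((isOpen_ne_fun (by fun_prop) (by fun_prop)).inter
      (isOpen_ne_fun (by fun_prop) (by fun_prop)))

theorem exists_isCompact_eventually_mem_theta3 {M : Type*} [TopologicalSpace M]
    [LocallyCompactSpace M] [T2Space M] (x : Theta3 M) :
    ∃ K : Set (Theta3 M), IsCompact K ∧ ∀ᶠ p in 𝓝 x.1, p ∈ Subtype.val '' K := by
  have hopen := isOpen_setOf_distinct_triple M
  have : LocallyCompactSpace (Theta3 M) := hopen.locallyCompactSpace
  obtain ⟨K, hK, hxK⟩ := exists_compact_mem_nhds x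
  exact ⟨K, hK, hopen.isOpenEmbedding_subtypeVal.image_mem_nhds.2 hxK⟩

theorem ConvergenceAction.noThreeMatching_limRel {G M T : Type*} [Group G] [TopologicalSpace M]
    [LocallyCompactSpace M] [T2Space M] {act : G → M → M} {hact : IsAction act}
    (hconv : ConvergenceAction hact) {l : Filter T} [l.NeBot] {γ : T → G}
    (hγ : Tendsto γ l cofinite) :
    NoThreeMatching (LimRel (fun t => act (γ t)) l) := by
  rintro x y ⟨z₁, hz₁, hgz₁⟩ ⟨z₂, hz₂, hgz₂⟩ ⟨z₃, hz₃, hgz₃⟩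
  obtain ⟨K, hK, hxK⟩ := exists_isCompact_eventually_mem_theta3 x
  obtain ⟨K', hK', hyK'⟩ := exists_isCompact_eventually_mem_theta3 y
  have hz := (hz₁.prodMk_nhds (hz₂.prodMk_nhds hz₃)).eventually hxK
  have hgz := (hgz₁.prodMk_nhds (hgz₂.prodMk_nhds hgz₃)).eventually hyK'
  have hfin := hγ.eventually (hconv _ (hK.union hK')).eventually_cofinite_notMem
  obtain ⟨t, ⟨p, hpK, hp⟩, ⟨q, hqK', hq⟩, ht⟩ := (hz.and (hgz.and hfin)).exists
  have hpq : theta3Map hact (γ t) p = q := by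
    apply Subtype.ext
    simp only [theta3Map, hp, hq]
  exact ht ⟨q, ⟨p, Or.inl hpK, hpq⟩, Or.inr hqK'⟩

theorem exists_isOpen_finite_of_eventually {G X Y : Type*} [TopologicalSpace X] {φ : G → X → Y}
    {a b : X} {U V : Set Y}
    (h : ∀ᶠ t in cofinite ×ˢ 𝓝 a ×ˢ 𝓝 b, ¬(φ t.1 t.2.1 ∈ U ∧ φ t.1 t.2.2 ∈ V)) :
    ∃ A B : Set X, IsOpen A ∧ IsOpen B ∧ a ∈ A ∧ b ∈ B ∧
      {g : G | (φ g '' A ∩ U).Nonempty ∧ (φ g '' B ∩ V).Nonempty}.Finite := by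
  obtain ⟨E, hE, N, hN, hEN⟩ := mem_prod_iff.1 h
  rw [← nhds_prod_eq] at hN
  obtain ⟨A, B, hA, haA, hB, hbB, hAB⟩ := mem_nhds_prod_iff'.1 hN
  refine ⟨A, B, hA, hB, haA, hbB, (mem_cofinite.1 hE).subset ?_⟩
  rintro g ⟨⟨_, ⟨p, hpA, rfl⟩, hpU⟩, _, ⟨q, hqB, rfl⟩, hqV⟩ hgE
  have hmem : (g, p, q) ∈ E ×ˢ N := ⟨hgE, hAB ⟨hpA, hqB⟩⟩
  exact hEN hmem ⟨hpU, hqV⟩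

theorem nontrivial_limRel_closure {T X : Type*} [TopologicalSpace X] [CompactSpace X]
    {φ : T → X → X} {W : Ultrafilter T} {p : T → X × X} {a : X × X} {C : Set X}
    (ha : a.1 ≠ a.2) (hp : Tendsto p W (𝓝 a)) (hC : ∀ᶠ t in W, pairMap (φ t) (p t) ∈ C ×ˢ C) :
    {x | ∃ y ∈ closure C, LimRel φ W x y}.Nontrivial :=
  ⟨a.1, exists_mem_closure_limRel hp.fst_nhds (hC.mono fun _ ht => ht.1),
    a.2, exists_mem_closure_limRel hp.snd_nhds (hC.mono fun _ ht => ht.2), ha⟩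

theorem statement6_general {G M : Type*} [Group G] [TopologicalSpace M] [CompactSpace M]
    [T2Space M] [Infinite M] {act : G → M → M} {hact : IsAction act}
    (hconv : ConvergenceAction hact) : ConditionC act := by
  rintro ⟨x, x'⟩ ⟨y, y'⟩ (rfl : x = x') (rfl : y = y') huv
  obtain ⟨U, hxU, hU, V, hyV, hV, hUV⟩ :=
    exists_open_nhds_disjoint_closure (ne_of_apply_ne (fun z => (z, z)) huv)
  refine ⟨U ×ˢ U, V ×ˢ V, hU.prod hU, hV.prod hV, ⟨hxU, hxU⟩, ⟨hyV, hyV⟩, fun a b ha hb _ => ?_⟩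
  refine exists_isOpen_finite_of_eventually (mem_iff_ultrafilter.2 fun W hW => ?_)
  refine Ultrafilter.eventually_not.2 fun hmem => ?_
  have hlim : Tendsto id (W : Filter (G × (M × M) × (M × M))) (cofinite ×ˢ 𝓝 a ×ˢ 𝓝 b) := hW
  have hmatching := hconv.noThreeMatching_limRel hlim.fst
  exact hmatching.not_disjoint_of_nontrivial
    (limRel_leftTotal W) (limRel_rightTotal (fun t => hact.surjective t.1) W)
    (nontrivial_limRel_closure ha hlim.snd.fst (hmem.mono fun _ ht => ht.1))
    (nontrivial_limRel_closure hb hlim.snd.snd (hmem.mono fun _ ht => ht.2)) hUV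

/-- Every convergence action of an infinite group on an infinite
compact metrizable space satisfies condition (C). -/
theorem statement6 {G M : Type*} [Group G] [Infinite G] [TopologicalSpace M]
    [CompactSpace M] [TopologicalSpace.MetrizableSpace M] [Infinite M]
    {act : G → M → M} (hact : IsActionByHomeos act)
    (hconv : ConvergenceAction hact.1) :
    ConditionC act :=
  statement6_general hconv
end

section
/- Let G be a group acting by homeomorphisms on a topological space M and let 𝒜 be a symmetric, G-invariant annulus system on M satisfying axioms (A1) and (A2). Then the function ρ on Θ₃(M) defined from the crossratio associated with 𝒜 takes only finite values and is a hyperbolic, G-invariant path quasimetric on Θ₃(M). -/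
/-- An `r`-quasimetric on a set `Q`. -/
def IsQuasimetric {Q : Type*} (r : ℝ) (ρ : Q → Q → ℝ) : Prop :=
  (∀ x y : Q, 0 ≤ ρ x y) ∧ (∀ x : Q, ρ x x = 0) ∧ (∀ x y : Q, ρ x y = ρ y x) ∧
  ∀ x y z : Q, ρ x y ≤ ρ x z + ρ z y + r

/-- A path quasimetric: a quasimetric such that, for some `s ≥ 0`, every pair of points
is connected by an `s`-geodesic segment. -/
def IsPathQuasimetric {Q : Type*} (ρ : Q → Q → ℝ) : Prop :=
  (∃ r : ℝ, 0 ≤ r ∧ IsQuasimetric r ρ) ∧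
  ∃ s : ℝ, 0 ≤ s ∧ ∀ x y : Q, ∃ (n : ℕ) (c : ℕ → Q), c 0 = x ∧ c n = y ∧
    ∀ i ≤ n, ∀ j ≤ n,
      -s ≤ ρ (c i) (c j) - |(i : ℝ) - (j : ℝ)| ∧ ρ (c i) (c j) - |(i : ℝ) - (j : ℝ)| ≤ s

/-- A hyperbolic quasimetric (four-point condition). -/
def IsHyperbolicQM {Q : Type*} (ρ : Q → Q → ℝ) : Prop :=
  ∃ k : ℝ, 0 ≤ k ∧ ∀ x y z w : Q,
    ρ x y + ρ z w ≤ max (ρ x z + ρ y w) (ρ x w + ρ y z) + k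

/-- An annulus on `M`: an ordered pair of disjoint closed sets not covering `M`. -/
def IsAnnulus {M : Type*} [TopologicalSpace M] (A : Set M × Set M) : Prop :=
  IsClosed A.1 ∧ IsClosed A.2 ∧ A.1 ∩ A.2 = ∅ ∧ A.1 ∪ A.2 ≠ Set.univ

/-- `K < A`. -/
def setLtAnn {M : Type*} [TopologicalSpace M] (K : Set M) (A : Set M × Set M) : Prop :=
  K ⊆ interior A.1

/-- `A < K`. -/
def annLtSet {M : Type*} [TopologicalSpace M] (A : Set M × Set M) (K : Set M) : Prop :=
  K ⊆ interior A.2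

/-- `A < B` for annuli. -/
def annLtAnn {M : Type*} [TopologicalSpace M] (A B : Set M × Set M) : Prop :=
  interior A.2 ∪ interior B.1 = Set.univ

/-- The crossratio `(K|L)` associated with an annulus system `𝒜`: the maximal number of
annuli of `𝒜` nested between `K` and `L`. -/
noncomputable def crossratio {M : Type*} [TopologicalSpace M] (𝒜 : Set (Set M × Set M))
    (K L : Set M) : ℕ∞ :=
  sSup {n : ℕ∞ | n = 0 ∨ ∃ m : ℕ, n = (m : ℕ∞) ∧ 0 < m ∧
    ∃ A : ℕ → Set M × Set M, (∀ i < m, A i ∈ 𝒜) ∧ setLtAnn K (A 0) ∧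
      (∀ i, i + 1 < m → annLtAnn (A i) (A (i + 1))) ∧ annLtSet (A (m - 1)) L}

/-- The components of a distinct triple. -/
def t3c {M : Type*} (x : Theta3 M) : Fin 3 → M := ![x.1.1, x.1.2.1, x.1.2.2]

/-- The function `ρ` on distinct triples defined from the crossratio:
`ρ(x,y) = max (x_i,x_j|y_k,y_l)` over `i ≠ j`, `k ≠ l`. -/
noncomputable def theta3rho {M : Type*} [TopologicalSpace M] (𝒜 : Set (Set M × Set M))
    (x y : Theta3 M) : ℕ∞ :=
  sSup {n : ℕ∞ | ∃ i j k l : Fin 3, i ≠ j ∧ k ≠ l ∧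
    n = crossratio 𝒜 {t3c x i, t3c x j} {t3c y k, t3c y l}}

section Quasimetrics

variable {Q : Type*} {ρ : Q → Q → ℝ} {r C s t : ℝ} {x y p q : Q}

theorem IsQuasimetric.nonneg_const (hρ : IsQuasimetric r ρ) (x : Q) : 0 ≤ r := by
  have htri := hρ.2.2.2 x x x
  rw [hρ.2.1 x] at htri
  linarith

/-- Up to an error `C`, the point `p` lies between `x` and `y`, at distance `t` from `x`: the
coarse version of a point of a geodesic from `x` to `y`. -/
def CoarselyBetween (ρ : Q → Q → ℝ) (C : ℝ) (x y : Q) (t : ℝ) (p : Q) : Prop :=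
  |ρ x p - t| ≤ C ∧ |ρ p y - (ρ x y - t)| ≤ C

theorem CoarselyBetween.abs_sub_le {k : ℝ} (hρ : IsQuasimetric r ρ)
    (hk : ∀ x y z w, ρ x y + ρ z w ≤ max (ρ x z + ρ y w) (ρ x w + ρ y z) + k)
    (hk₀ : 0 ≤ k) (hp : CoarselyBetween ρ C x y s p) (hq : CoarselyBetween ρ C x y t q)
    (hst : s ≤ t) : |ρ p q - (t - s)| ≤ 2 * C + k + r := by
  obtain ⟨hxp, hpy⟩ := hp
  obtain ⟨hxq, hqy⟩ := hq
  rw [abs_le] at *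
  have hr := hρ.nonneg_const x
  have lower : ρ x q ≤ ρ x p + ρ p q + r := hρ.2.2.2 x q p
  have upper : ρ p q + ρ x y ≤ ρ x y + (t - s) + 2 * C + k :=
    calc ρ p q + ρ x y ≤ max (ρ p x + ρ q y) (ρ p y + ρ q x) + k := hk p q x y
      _ = max (ρ x p + ρ q y) (ρ p y + ρ x q) + k := by rw [hρ.2.2.1 p x, hρ.2.2.1 q x]
      _ ≤ ρ x y + (t - s) + 2 * C + k := by gcongr; apply max_le <;> linarith
  constructor <;> linarith

theorem IsQuasimetric.exists_coarselyBetween_seq (hρ : IsQuasimetric r ρ)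
    (hmid : ∀ i : ℕ, i ≤ ρ x y → ∃ p, CoarselyBetween ρ C x y i p) :
    ∃ (n : ℕ) (c : ℕ → Q), c 0 = x ∧ c n = y ∧
      ∀ i ≤ n, CoarselyBetween ρ (C + 1) x y i (c i) := by
  have : Nonempty Q := ⟨x⟩
  choose! p hp using hmid
  have hxy := hρ.1 x y
  have hC : 0 ≤ C := (abs_nonneg _).trans (hp 0 (by simpa using hxy)).1
  set n := ⌊ρ x y⌋₊ + 1 with hn
  refine ⟨n, fun i => if i = 0 then x else if i = n then y else p i, by simp, by simp [hn],
    fun i hi => ?_⟩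
  dsimp only
  split_ifs with hi₀ hin
  · simp only [CoarselyBetween, hi₀, hρ.2.1 x, Nat.cast_zero, sub_self, sub_zero, abs_zero]
    constructor <;> linarith
  · have hlt := Nat.lt_floor_add_one (ρ x y)
    have hle := Nat.floor_le hxy
    simp only [CoarselyBetween, hin, hn, hρ.2.1 y, Nat.cast_add, Nat.cast_one, abs_le]
    refine ⟨⟨?_, ?_⟩, ?_, ?_⟩ <;> linarith
  · have hi' : (i : ℝ) ≤ ρ x y := (Nat.le_floor_iff hxy).1 (by omega)
    exact ⟨(hp i hi').1.trans (by linarith), (hp i hi').2.trans (by linarith)⟩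

theorem IsHyperbolicQM.isPathQuasimetric (hyp : IsHyperbolicQM ρ) (hr : 0 ≤ r)
    (hρ : IsQuasimetric r ρ) (hC : 0 ≤ C)
    (hmid : ∀ x y, ∀ i : ℕ, i ≤ ρ x y → ∃ p, CoarselyBetween ρ C x y i p) :
    IsPathQuasimetric ρ := by
  obtain ⟨k, hk₀, hk⟩ := hyp
  refine ⟨⟨r, hr, hρ⟩, 2 * (C + 1) + k + r, by positivity, fun x y => ?_⟩
  obtain ⟨n, c, hc₀, hcn, hc⟩ := hρ.exists_coarselyBetween_seq (hmid x y)
  refine ⟨n, c, hc₀, hcn, fun i hi j hj => ?_⟩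
  rw [← abs_le]
  wlog hij : i ≤ j generalizing i j
  · rw [hρ.2.2.1, abs_sub_comm (i : ℝ)]
    exact this j hj i hi (by omega)
  have hij' : (i : ℝ) ≤ j := Nat.cast_le.2 hij
  rw [abs_sub_comm (i : ℝ), abs_of_nonneg (sub_nonneg.2 hij')]
  exact (hc i hi).abs_sub_le hρ hk hk₀ (hc j hj) hij'

end Quasimetrics

section Treelike

variable {X : Type*} {c : Set X → Set X → ℕ} {k : ℕ}

/-- The axioms of a crossratio `(K|L)` between nonempty sets that looks, up to the error `k`, like
the distance between the convex hulls of `K` and `L` in a tree. -/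
structure IsTreelike (c : Set X → Set X → ℕ) (k : ℕ) : Prop where
  self (x : X) : c {x} {x} = 0
  symm (K L : Set X) : c K L = c L K
  anti {K K' L L' : Set X} : K'.Nonempty → L'.Nonempty → K' ⊆ K → L' ⊆ L → c K L ≤ c K' L'
  split {K L : Set X} (u : X) : K.Nonempty → L.Nonempty →
    c K L ≤ c K (insert u L) + c (insert u K) L + 1
  concat {K L : Set X} (u : X) : K.Nonempty → L.Nonempty →
    c K (insert u L) + c (insert u K) L ≤ c K L + 2 * (k + 1)
  cross (x y z w : X) : c {x, y} {z, w} ≤ k ∨ c {x, z} {y, w} ≤ k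

/-- Away from its two ends, every segment `[x, y]` has points at all distances `i` from `x`. Here
`m` counts as a point of the segment if `(x, y|m) ≤ k`. -/
def HasIntermediatePoints (c : Set X → Set X → ℕ) (k : ℕ) : Prop :=
  ∀ (x y : X) (i : ℕ), k < i → i + k + 2 ≤ c {x} {y} →
    ∃ m, i ≤ c {x} {m, y} ∧ c {x} {y} ≤ c {m, x} {y} + i + 1 ∧ c {x, y} {m} ≤ k

namespace IsTreelike

theorem singleton_le_tree (h : IsTreelike c k) (x y z w : X) :
    c {x} {y} ≤ c {x} {w, z, y} + c {w, x} {z, y} + c {z, x} {w, y} + c {w, z, x} {y} + 3 := by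
  have hz := h.split z (Set.singleton_nonempty x) (Set.singleton_nonempty y)
  have hwy := h.split w (Set.singleton_nonempty x) (Set.insert_nonempty z {y})
  have hwx := h.split w (Set.insert_nonempty z {x}) (Set.singleton_nonempty y)
  omega

theorem tree_le_singleton (h : IsTreelike c k) (x y z w : X) :
    c {x} {w, z, y} + c {w, x} {z, y} + c {z, x} {w, y} + c {w, z, x} {y} ≤
      c {x} {y} + 6 * (k + 1) := by
  have hz := h.concat z (Set.singleton_nonempty x) (Set.singleton_nonempty y)
  have hwy := h.concat w (Set.singleton_nonempty x) (Set.insert_nonempty z {y})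
  have hwx := h.concat w (Set.insert_nonempty z {x}) (Set.singleton_nonempty y)
  omega

theorem four_point (h : IsTreelike c k) (x y z w : X) :
    c {x} {y} + c {z} {w} ≤
      max (c {x} {z} + c {y} {w}) (c {x} {w} + c {y} {z}) + (14 * k + 18) := by
  have hxy := h.singleton_le_tree x y z w
  have hzw := h.singleton_le_tree z w x y
  have hxz := h.tree_le_singleton x z y w
  have hyw := h.tree_le_singleton y w x z
  have hxw := h.tree_le_singleton x w y z
  have hyz := h.tree_le_singleton y z x w
  have hcross := h.cross x z w y
  -- All six distances are sums over a tree with outer edges `(x|yzw)`, `(y|xzw)`, `(z|xyw)`,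
  -- `(w|xyz)` and inner edges `(xy|zw)`, `(xz|yw)`, `(xw|yz)`. The sums on the two sides only
  -- differ in the inner edges, and one of the last two has length at most `k`.
  grind [Set.insert_comm, Set.pair_comm, h.symm]

theorem triangle (h : IsTreelike c k) (x y u : X) :
    c {x} {y} ≤ c {x} {u} + c {u} {y} + 1 := by
  have hu := h.split u (Set.singleton_nonempty x) (Set.singleton_nonempty y)
  have hxu : c {x} {u, y} ≤ c {x} {u} := h.anti (by simp) (by simp) subset_rfl (by simp)
  have huy : c {u, x} {y} ≤ c {u} {y} := h.anti (by simp) (by simp) (by simp) subset_rfl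
  omega

theorem isQuasimetric (h : IsTreelike c k) :
    IsQuasimetric 1 (fun x y => (c {x} {y} : ℝ)) :=
  ⟨fun _ _ => Nat.cast_nonneg _, fun x => by simp only [h.self, Nat.cast_zero],
    fun x y => by simp only [h.symm {x}],
    fun x y u => by beta_reduce; exact_mod_cast h.triangle x y u⟩

theorem isHyperbolicQM (h : IsTreelike c k) :
    IsHyperbolicQM (fun x y => (c {x} {y} : ℝ)) :=
  ⟨14 * k + 18, by positivity, fun x y z w => by beta_reduce; exact_mod_cast h.four_point x y z w⟩

theorem exists_coarselyBetween (h : IsTreelike c k) (hmid : HasIntermediatePoints c k) {x y : X}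
    {i : ℕ} (hi : i ≤ c {x} {y}) :
    ∃ p, CoarselyBetween (fun x y => (c {x} {y} : ℝ)) (3 * k + 4) x y i p := by
  suffices ∃ p, c {x} {p} ≤ i + (3 * k + 4) ∧ i ≤ c {x} {p} + (3 * k + 4) ∧
      c {p} {y} + i ≤ c {x} {y} + (3 * k + 4) ∧ c {x} {y} ≤ c {p} {y} + i + (3 * k + 4) by
    obtain ⟨p, h₁, h₂, h₃, h₄⟩ := this
    rify at h₁ h₂ h₃ h₄
    refine ⟨p, ?_, ?_⟩ <;> rw [abs_le] <;> constructor <;> linarith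
  by_cases hik : i ≤ k
  · exact ⟨x, by have := h.self x; omega⟩
  by_cases hiy : i + k + 2 ≤ c {x} {y}
  swap
  · exact ⟨y, by have := h.self y; omega⟩
  obtain ⟨m, hxm, hmy, hm⟩ := hmid x y i (by omega) hiy
  have hsplit_x := h.split y (Set.singleton_nonempty x) (Set.singleton_nonempty m)
  have hsplit_y := h.split x (Set.singleton_nonempty m) (Set.singleton_nonempty y)
  have hconcat := h.concat m (Set.singleton_nonempty x) (Set.singleton_nonempty y)
  have hanti_x : c {x} {m, y} ≤ c {x} {m} := h.anti (by simp) (by simp) subset_rfl (by simp)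
  have hanti_y : c {m, x} {y} ≤ c {m} {y} := h.anti (by simp) (by simp) (by simp) subset_rfl
  rw [Set.pair_comm y x] at hsplit_x
  exact ⟨m, by grind [Set.pair_comm, h.symm]⟩

theorem isPathQuasimetric (h : IsTreelike c k) (hmid : HasIntermediatePoints c k) :
    IsPathQuasimetric (fun x y => (c {x} {y} : ℝ)) :=
  h.isHyperbolicQM.isPathQuasimetric zero_le_one h.isQuasimetric
    (C := 3 * k + 4) (by positivity)
    fun _ _ _ hi => h.exists_coarselyBetween hmid (by exact_mod_cast hi)

end IsTreelike

end Treelike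

section Separations

variable {X : Type*}

/-- Two disjoint sets, the sides of a wall in `X`. They need not cover `X`. -/
structure Separation (X : Type*) where
  minus : Set X
  plus : Set X
  disjoint : Disjoint minus plus

namespace Separation

variable {𝒮 : Set (Separation X)} {s t : Separation X} {K K' L L' : Set X}
  {l l' l₁ l₂ : List (Separation X)} {u v : X} {k : ℕ}

/-- The nesting of walls: every point has passed `s` or not yet reached `t`. -/
instance : LT (Separation X) := ⟨fun s t => ∀ v, v ∈ s.plus ∨ v ∈ t.minus⟩

theorem not_lt_iff : ¬s < t ↔ ∃ v, v ∉ s.plus ∧ v ∉ t.minus := by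
  simp only [LT.lt, not_forall, not_or]

theorem minus_subset_of_lt (h : s < t) : s.minus ⊆ t.minus :=
  fun v hv => (h v).resolve_left (s.disjoint.notMem_of_mem_left hv)

theorem plus_subset_of_lt (h : s < t) : t.plus ⊆ s.plus :=
  fun v hv => (h v).resolve_right (t.disjoint.notMem_of_mem_right hv)

instance : IsTrans (Separation X) (· < ·) :=
  ⟨fun _ _ _ hst htu v => (hst v).imp_right (minus_subset_of_lt htu ·)⟩

/-- The same wall, crossed in the opposite direction. -/
def swap (s : Separation X) : Separation X := ⟨s.plus, s.minus, s.disjoint.symm⟩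

theorem swap_lt_swap (h : s < t) : t.swap < s.swap := fun v => (h v).symm

theorem length_le_length_filter_add [∀ s : Separation X, Decidable (u ∈ s.plus)]
    [∀ s : Separation X, Decidable (u ∈ s.minus)] (hl : l.Pairwise (· < ·)) :
    l.length ≤ (l.filter (u ∈ ·.plus)).length + (l.filter (u ∈ ·.minus)).length + 1 := by
  induction l with
  | nil => exact Nat.zero_le _
  | cons s l ih =>
    obtain ⟨hs, hl⟩ := List.pairwise_cons.1 hl
    by_cases hu : u ∈ s.plus
    · have := (List.sublist_cons_self s l).filter (u ∈ ·.minus) |>.length_le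
      have := ih hl
      simp only [List.filter_cons, hu, decide_true, if_true, List.length_cons] at *
      omega
    · have hfilter : l.filter (u ∈ ·.minus) = l :=
        List.filter_eq_self.2 fun t ht => by simpa using (hs t ht u).resolve_left hu
      have := (List.sublist_cons_self s l).filter (u ∈ ·.minus) |>.length_le
      rw [hfilter] at this
      rw [List.length_cons]
      omega

/-- `l` is a nested sequence of walls of `𝒮`, each of which separates `K` from `L`. -/
structure IsChainBetween (𝒮 : Set (Separation X)) (K L : Set X) (l : List (Separation X)) :
    Prop where
  pairwise : l.Pairwise (· < ·)
  mem : ∀ s ∈ l, s ∈ 𝒮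
  subset_minus : ∀ s ∈ l, K ⊆ s.minus
  subset_plus : ∀ s ∈ l, L ⊆ s.plus

namespace IsChainBetween

theorem nil : IsChainBetween 𝒮 K L [] := by constructor <;> simp

theorem sublist (h : IsChainBetween 𝒮 K L l) (hl : l'.Sublist l) : IsChainBetween 𝒮 K L l' :=
  ⟨h.pairwise.sublist hl, fun s hs => h.mem s (hl.subset hs),
    fun s hs => h.subset_minus s (hl.subset hs), fun s hs => h.subset_plus s (hl.subset hs)⟩

theorem anti (h : IsChainBetween 𝒮 K L l) (hK : K' ⊆ K) (hL : L' ⊆ L) :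
    IsChainBetween 𝒮 K' L' l :=
  ⟨h.pairwise, h.mem, fun s hs => hK.trans (h.subset_minus s hs),
    fun s hs => hL.trans (h.subset_plus s hs)⟩

theorem insert_left (h : IsChainBetween 𝒮 K L l) (hu : ∀ s ∈ l, u ∈ s.minus) :
    IsChainBetween 𝒮 (insert u K) L l :=
  ⟨h.pairwise, h.mem, fun s hs => Set.insert_subset (hu s hs) (h.subset_minus s hs), h.subset_plus⟩

theorem insert_right (h : IsChainBetween 𝒮 K L l) (hu : ∀ s ∈ l, u ∈ s.plus) :
    IsChainBetween 𝒮 K (insert u L) l :=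
  ⟨h.pairwise, h.mem, h.subset_minus, fun s hs => Set.insert_subset (hu s hs) (h.subset_plus s hs)⟩

theorem swap (h𝒮 : ∀ s ∈ 𝒮, s.swap ∈ 𝒮) (h : IsChainBetween 𝒮 K L l) :
    IsChainBetween 𝒮 L K (l.reverse.map Separation.swap) where
  pairwise := List.pairwise_map.2 (List.pairwise_reverse.2 (h.pairwise.imp swap_lt_swap))
  mem := by simpa using fun s hs => h𝒮 s (h.mem s hs)
  subset_minus := by simpa [Separation.swap] using h.subset_plus
  subset_plus := by simpa [Separation.swap] using h.subset_minus

theorem exists_split (h : IsChainBetween 𝒮 K L l) (u : X) :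
    ∃ l₁ l₂, IsChainBetween 𝒮 K (insert u L) l₁ ∧ IsChainBetween 𝒮 (insert u K) L l₂ ∧
      l.length ≤ l₁.length + l₂.length + 1 := by
  classical
  exact ⟨l.filter (u ∈ ·.plus), l.filter (u ∈ ·.minus),
    (h.sublist List.filter_sublist).insert_right fun s hs => by simpa using List.of_mem_filter hs,
    (h.sublist List.filter_sublist).insert_left fun s hs => by simpa using List.of_mem_filter hs,
    length_le_length_filter_add h.pairwise⟩

end IsChainBetween

theorem isChainBetween_ofFn {n : ℕ} {f : Fin (n + 1) → Separation X}
    (hf : ∀ i : Fin n, f i.castSucc < f i.succ) (hmem : ∀ i, f i ∈ 𝒮) (hK : K ⊆ (f 0).minus)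
    (hL : L ⊆ (f (Fin.last n)).plus) : IsChainBetween 𝒮 K L (List.ofFn f) := by
  have hmono : ∀ i j, i < j → f i < f j := fun i j hij => (Fin.liftFun_iff_succ (· < ·)).2 hf hij
  refine ⟨List.pairwise_ofFn.2 hmono, List.forall_mem_ofFn_iff.2 hmem,
    List.forall_mem_ofFn_iff.2 fun i => ?_, List.forall_mem_ofFn_iff.2 fun i => ?_⟩
  · obtain rfl | hi := eq_or_ne i 0
    · exact hK
    · exact hK.trans (minus_subset_of_lt (hmono 0 i (Fin.pos_iff_ne_zero.2 hi)))
  · obtain rfl | hi := eq_or_ne i (Fin.last n)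
    · exact hL
    · exact hL.trans (plus_subset_of_lt (hmono i _ (Fin.lt_last_iff_ne_last.2 hi)))

/-- The crossratio `(K|L)` of a set of walls: the maximal length of a chain between `K` and `L`. -/
noncomputable def crossratio (𝒮 : Set (Separation X)) (K L : Set X) : ℕ∞ :=
  ⨆ l : {l // IsChainBetween 𝒮 K L l}, (l.1.length : ℕ∞)

/-- Axiom (A2) with the constant `k`. -/
def CrossBounded (𝒮 : Set (Separation X)) (k : ℕ) : Prop :=
  ∀ x y z w : X, crossratio 𝒮 {x, y} {z, w} ≤ k ∨ crossratio 𝒮 {x, z} {y, w} ≤ k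

theorem IsChainBetween.length_le_crossratio (h : IsChainBetween 𝒮 K L l) :
    l.length ≤ crossratio 𝒮 K L :=
  le_iSup (fun l : {l // IsChainBetween 𝒮 K L l} => (l.1.length : ℕ∞)) ⟨l, h⟩

theorem crossratio_le_iff {n : ℕ∞} :
    crossratio 𝒮 K L ≤ n ↔ ∀ l, IsChainBetween 𝒮 K L l → l.length ≤ n := by
  simp only [crossratio, iSup_le_iff, Subtype.forall]

theorem exists_length_eq_crossratio (h : crossratio 𝒮 K L ≠ ⊤) :
    ∃ l, IsChainBetween 𝒮 K L l ∧ l.length = crossratio 𝒮 K L := by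
  have : Nonempty {l // IsChainBetween 𝒮 K L l} := ⟨[], .nil⟩
  obtain ⟨l, hl⟩ := ENat.exists_eq_iSup_of_lt_top h.lt_top
  exact ⟨l, l.2, hl⟩

theorem CrossBounded.length_le_or {x y z w : X} (h : CrossBounded 𝒮 k)
    (h₁ : IsChainBetween 𝒮 {x, y} {z, w} l₁) (h₂ : IsChainBetween 𝒮 {x, z} {y, w} l₂) :
    l₁.length ≤ k ∨ l₂.length ≤ k := by
  have := h x y z w
  exact this.imp (fun h => by exact_mod_cast h₁.length_le_crossratio.trans h)
    fun h => by exact_mod_cast h₂.length_le_crossratio.trans h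

theorem CrossBounded.lt_of_mem_take_of_mem_drop (h𝒮 : CrossBounded 𝒮 k)
    (h₁ : IsChainBetween 𝒮 K (insert u L) l₁) (h₂ : IsChainBetween 𝒮 (insert u K) L l₂)
    (hK : K.Nonempty) (hL : L.Nonempty) (hs : s ∈ l₁.take (l₁.length - (k + 1)))
    (ht : t ∈ l₂.drop (k + 1)) : s < t := by
  by_contra hst
  obtain ⟨v, hvs, hvt⟩ := not_lt_iff.1 hst
  obtain ⟨p, hp⟩ := hK
  obtain ⟨q, hq⟩ := hL
  set i := l₁.length - (k + 1)
  have hminus : ∀ s' ∈ l₁.drop i, v ∈ s'.minus := fun s' hs' => by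
    have := h₁.pairwise
    rw [← List.take_append_drop i l₁, List.pairwise_append] at this
    exact (this.2.2 s hs s' hs' v).resolve_left hvs
  have hplus : ∀ t' ∈ l₂.take (k + 1), v ∈ t'.plus := fun t' ht' => by
    have := h₂.pairwise
    rw [← List.take_append_drop (k + 1) l₂, List.pairwise_append] at this
    exact (this.2.2 t' ht' t ht v).resolve_right hvt
  have hchain₁ : IsChainBetween 𝒮 {p, v} {u, q} (l₁.drop i) :=
    ((h₁.sublist (List.drop_sublist i l₁)).insert_left hminus).anti
      (by grind) (by grind)
  have hchain₂ : IsChainBetween 𝒮 {p, u} {v, q} (l₂.take (k + 1)) :=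
    ((h₂.sublist (List.take_sublist (k + 1) l₂)).insert_right hplus).anti
      (by grind) (by grind)
  have := List.length_pos_of_mem hs
  have := List.length_pos_of_mem ht
  have := h𝒮.length_le_or hchain₁ hchain₂
  simp only [List.length_drop, List.length_take] at *
  omega

theorem CrossBounded.exists_concat (h𝒮 : CrossBounded 𝒮 k)
    (h₁ : IsChainBetween 𝒮 K (insert u L) l₁) (h₂ : IsChainBetween 𝒮 (insert u K) L l₂)
    (hK : K.Nonempty) (hL : L.Nonempty) :
    ∃ l, IsChainBetween 𝒮 K L l ∧ l₁.length + l₂.length ≤ l.length + 2 * (k + 1) := by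
  have h₁' := (h₁.anti subset_rfl (Set.subset_insert u L)).sublist
    (List.take_sublist (l₁.length - (k + 1)) l₁)
  have h₂' := (h₂.anti (Set.subset_insert u K) subset_rfl).sublist (List.drop_sublist (k + 1) l₂)
  refine ⟨l₁.take (l₁.length - (k + 1)) ++ l₂.drop (k + 1), ⟨?_, ?_, ?_, ?_⟩, ?_⟩
  · exact List.pairwise_append.2 ⟨h₁'.pairwise, h₂'.pairwise, fun s hs t ht =>
      h𝒮.lt_of_mem_take_of_mem_drop h₁ h₂ hK hL hs ht⟩
  · exact List.forall_mem_append.2 ⟨h₁'.mem, h₂'.mem⟩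
  · exact List.forall_mem_append.2 ⟨h₁'.subset_minus, h₂'.subset_minus⟩
  · exact List.forall_mem_append.2 ⟨h₁'.subset_plus, h₂'.subset_plus⟩
  · simp only [List.length_append, List.length_take, List.length_drop]
    omega

theorem crossratio_anti (hK : K' ⊆ K) (hL : L' ⊆ L) : crossratio 𝒮 K L ≤ crossratio 𝒮 K' L' :=
  crossratio_le_iff.2 fun _ hl => (hl.anti hK hL).length_le_crossratio

theorem crossratio_singleton_self (x : X) : crossratio 𝒮 {x} {x} = 0 := by
  refine nonpos_iff_eq_zero.1 (crossratio_le_iff.2 fun l hl => ?_)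
  cases l with
  | nil => simp
  | cons s l =>
    exact absurd (hl.subset_plus s List.mem_cons_self rfl)
      (s.disjoint.notMem_of_mem_left (hl.subset_minus s List.mem_cons_self rfl))

theorem crossratio_comm (h𝒮 : ∀ s ∈ 𝒮, s.swap ∈ 𝒮) (K L : Set X) :
    crossratio 𝒮 K L = crossratio 𝒮 L K := by
  have hle : ∀ K L, crossratio 𝒮 K L ≤ crossratio 𝒮 L K := fun K L =>
    crossratio_le_iff.2 fun l hl => by simpa using (hl.swap h𝒮).length_le_crossratio
  exact (hle K L).antisymm (hle L K)

theorem crossratio_le_split (u : X) :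
    crossratio 𝒮 K L ≤ crossratio 𝒮 K (insert u L) + crossratio 𝒮 (insert u K) L + 1 := by
  refine crossratio_le_iff.2 fun l hl => ?_
  obtain ⟨l₁, l₂, h₁, h₂, hlen⟩ := hl.exists_split u
  calc (l.length : ℕ∞) ≤ l₁.length + l₂.length + 1 := by exact_mod_cast hlen
    _ ≤ _ := by gcongr <;> apply IsChainBetween.length_le_crossratio <;> assumption

theorem CrossBounded.crossratio_concat_le (h𝒮 : CrossBounded 𝒮 k) (u : X) (hK : K.Nonempty)
    (hL : L.Nonempty) :
    crossratio 𝒮 K (insert u L) + crossratio 𝒮 (insert u K) L ≤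
      crossratio 𝒮 K L + 2 * (k + 1) := by
  have : Nonempty {l // IsChainBetween 𝒮 K (insert u L) l} := ⟨[], .nil⟩
  have : Nonempty {l // IsChainBetween 𝒮 (insert u K) L l} := ⟨[], .nil⟩
  refine ENat.iSup_add_iSup_le fun ⟨l₁, h₁⟩ ⟨l₂, h₂⟩ => ?_
  obtain ⟨l, hl, hlen⟩ := h𝒮.exists_concat h₁ h₂ hK hL
  calc (l₁.length + l₂.length : ℕ∞) ≤ l.length + 2 * (k + 1) := by exact_mod_cast hlen
    _ ≤ _ := by gcongr; exact hl.length_le_crossratio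

theorem crossratio_ne_top_of_nonempty (hfin : ∀ x y : X, crossratio 𝒮 {x} {y} ≠ ⊤)
    (hK : K.Nonempty) (hL : L.Nonempty) : crossratio 𝒮 K L ≠ ⊤ := by
  obtain ⟨x, hx⟩ := hK
  obtain ⟨y, hy⟩ := hL
  exact ne_top_of_le_ne_top (hfin x y)
    (crossratio_anti (Set.singleton_subset_iff.2 hx) (Set.singleton_subset_iff.2 hy))

theorem IsChainBetween.length_le_toNat_crossratio (h : IsChainBetween 𝒮 K L l)
    (hfin : ∀ x y : X, crossratio 𝒮 {x} {y} ≠ ⊤) (hK : K.Nonempty) (hL : L.Nonempty) :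
    l.length ≤ (crossratio 𝒮 K L).toNat := by
  simpa using ENat.toNat_le_toNat h.length_le_crossratio (crossratio_ne_top_of_nonempty hfin hK hL)

theorem CrossBounded.isTreelike (hA2 : CrossBounded 𝒮 k) (h𝒮 : ∀ s ∈ 𝒮, s.swap ∈ 𝒮)
    (hfin : ∀ x y : X, crossratio 𝒮 {x} {y} ≠ ⊤) :
    IsTreelike (fun K L => (crossratio 𝒮 K L).toNat) k := by
  have coe_toNat {K L : Set X} (hK : K.Nonempty) (hL : L.Nonempty) :=
    ENat.natCast_toNat (crossratio_ne_top_of_nonempty hfin hK hL)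
  refine ⟨fun x => ?_, fun K L => ?_, fun hK' hL' hK hL => ?_, fun {K L} u hK hL => ?_,
    fun {K L} u hK hL => ?_, fun x y z w => ?_⟩
  · rw [crossratio_singleton_self, ENat.toNat_zero]
  · rw [crossratio_comm h𝒮]
  · exact ENat.toNat_le_toNat (crossratio_anti hK hL) (crossratio_ne_top_of_nonempty hfin hK' hL')
  · have := crossratio_le_split (𝒮 := 𝒮) (K := K) (L := L) u
    rw [← coe_toNat hK hL, ← coe_toNat hK (Set.insert_nonempty u L),
      ← coe_toNat (Set.insert_nonempty u K) hL] at this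
    exact_mod_cast this
  · have := hA2.crossratio_concat_le u hK hL
    rw [← coe_toNat hK hL, ← coe_toNat hK (Set.insert_nonempty u L),
      ← coe_toNat (Set.insert_nonempty u K) hL] at this
    exact_mod_cast this
  · exact (hA2 x y z w).imp ENat.toNat_le_of_le_natCast ENat.toNat_le_of_le_natCast

end Separation

end Separations

section Triples

variable {X : Type*} {x y : Theta3 X} {U V : Set X}

theorem t3c_injective (x : Theta3 X) : Function.Injective (t3c x) := by
  obtain ⟨⟨a, b, c⟩, hab, hbc, hac⟩ := x
  intro i j
  fin_cases i <;> fin_cases j <;> simp_all [t3c, eq_comm]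

theorem t3c_theta3Map {G : Type*} [Group G] {act : G → X → X} (hact : IsAction act) (g : G)
    (x : Theta3 X) (i : Fin 3) : t3c (theta3Map hact g x) i = act g (t3c x i) := by
  fin_cases i <;> rfl

/-- At least two of the three points of the triple `x` are in `U`. -/
def Majority (x : Theta3 X) (U : Set X) : Prop :=
  ∃ i j, i ≠ j ∧ t3c x i ∈ U ∧ t3c x j ∈ U

theorem Majority.mono (h : Majority x U) (hUV : U ⊆ V) : Majority x V :=
  let ⟨i, j, hij, hi, hj⟩ := h
  ⟨i, j, hij, hUV hi, hUV hj⟩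

theorem majority_mk_iff {a b c : X} {h} :
    Majority (⟨(a, b, c), h⟩ : Theta3 X) U ↔ a ∈ U ∧ b ∈ U ∨ b ∈ U ∧ c ∈ U ∨ a ∈ U ∧ c ∈ U := by
  constructor
  · rintro ⟨i, j, hij, hi, hj⟩
    fin_cases i <;> fin_cases j <;> simp_all [t3c]
  · rintro (⟨ha, hb⟩ | ⟨hb, hc⟩ | ⟨ha, hc⟩)
    exacts [⟨0, 1, by decide, ha, hb⟩, ⟨1, 2, by decide, hb, hc⟩, ⟨0, 2, by decide, ha, hc⟩]

theorem Majority.exists_mem_inter (hU : Majority x U) (hV : Majority x V) :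
    ∃ i, t3c x i ∈ U ∩ V := by
  obtain ⟨i, j, hij, hi, hj⟩ := hU
  obtain ⟨i', j', hij', hi', hj'⟩ := hV
  have hcommon : i = i' ∨ i = j' ∨ j = i' ∨ j = j' := by omega
  grind

theorem majority_or_majority (x : Theta3 X) (h : ∀ v, v ∈ U ∨ v ∈ V) :
    Majority x U ∨ Majority x V := by
  obtain ⟨⟨a, b, c⟩, hx⟩ := x
  have := h a
  have := h b
  have := h c
  simp only [majority_mk_iff]
  tauto

theorem exists_map_eq_of_forall_mem_image {α β : Type*} {f : α → β} {S : Set α} {l : List β}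
    (hl : ∀ b ∈ l, b ∈ f '' S) : ∃ l' : List α, (∀ a ∈ l', a ∈ S) ∧ l'.map f = l := by
  have hrange : l ∈ Set.range (List.map (S.domRestrict f)) := by
    rwa [Set.range_list_map, Set.range_domRestrict]
  obtain ⟨l', rfl⟩ := hrange
  exact ⟨l'.map Subtype.val, List.forall_mem_map.2 fun a _ => a.2, List.map_map⟩

namespace Separation

variable {𝒮 : Set (Separation X)} {s t : Separation X} {l l₁ l₂ : List (Separation X)}
  {L : List (Separation (Theta3 X))} {𝒦 ℒ : Set (Theta3 X)} {u : X} {k : ℕ}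

/-- The wall induced on triples by majority vote. -/
def triples (s : Separation X) : Separation (Theta3 X) where
  minus := {x | Majority x s.minus}
  plus := {x | Majority x s.plus}
  disjoint := Set.disjoint_left.2 fun _ hminus hplus =>
    let ⟨_, hi, hi'⟩ := hminus.exists_mem_inter hplus
    s.disjoint.notMem_of_mem_left hi hi'

theorem triples_lt_triples (h : s < t) : s.triples < t.triples :=
  fun x => majority_or_majority x h

theorem lt_of_triples_lt_triples (h : s.triples < t.triples)
    (hminus : (s.minus ∩ t.minus).Nonempty) (hplus : (s.plus ∩ t.plus).Nonempty) : s < t := by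
  obtain ⟨p, hps, hpt⟩ := hminus
  obtain ⟨q, hqs, hqt⟩ := hplus
  have hps' := s.disjoint.notMem_of_mem_left hps
  have hqt' := t.disjoint.notMem_of_mem_right hqt
  by_contra hst
  obtain ⟨v, hvs, hvt⟩ := not_lt_iff.1 hst
  have hdistinct : v ≠ p ∧ p ≠ q ∧ v ≠ q := by grind
  have hmajority : Majority _ s.plus ∨ Majority _ t.minus := h ⟨(v, p, q), hdistinct⟩
  simp only [majority_mk_iff] at hmajority
  tauto

theorem swap_mem_triples (h𝒮 : ∀ s ∈ 𝒮, s.swap ∈ 𝒮) :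
    ∀ s ∈ triples '' 𝒮, s.swap ∈ triples '' 𝒮 :=
  Set.forall_mem_image.2 fun s hs => ⟨s.swap, h𝒮 s hs, rfl⟩

theorem majority_iInter_minus (hl : l.Pairwise (· < ·)) (hx : ∀ s ∈ l, Majority x s.minus) :
    Majority x (⋂ s ∈ l, s.minus) := by
  cases l with
  | nil => exact ⟨0, 1, by decide, by simp, by simp⟩
  | cons s l =>
    refine (hx s List.mem_cons_self).mono (Set.subset_iInter₂ fun t ht => ?_)
    obtain rfl | ht := List.mem_cons.1 ht
    · rfl
    · exact minus_subset_of_lt (List.rel_of_pairwise_cons hl ht)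

theorem majority_iInter_plus (hl : l.Pairwise (· < ·)) (hx : ∀ s ∈ l, Majority x s.plus) :
    Majority x (⋂ s ∈ l, s.plus) := by
  have hswap : (l.reverse.map swap).Pairwise (· < ·) :=
    List.pairwise_map.2 (List.pairwise_reverse.2 (hl.imp swap_lt_swap))
  refine (majority_iInter_minus hswap (by simpa [swap] using hx)).mono ?_
  exact Set.subset_iInter₂ fun s hs => Set.biInter_subset_of_mem (t := minus) (x := s.swap)
    (List.mem_map_of_mem (List.mem_reverse.2 hs))

theorem IsChainBetween.map_triples (h : IsChainBetween 𝒮 U V l) (hU : ∀ x ∈ 𝒦, Majority x U)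
    (hV : ∀ y ∈ ℒ, Majority y V) : IsChainBetween (triples '' 𝒮) 𝒦 ℒ (l.map triples) where
  pairwise := List.pairwise_map.2 (h.pairwise.imp triples_lt_triples)
  mem := List.forall_mem_map.2 fun s hs => Set.mem_image_of_mem _ (h.mem s hs)
  subset_minus := List.forall_mem_map.2 fun s hs x hx => (hU x hx).mono (h.subset_minus s hs)
  subset_plus := List.forall_mem_map.2 fun s hs y hy => (hV y hy).mono (h.subset_plus s hs)

theorem IsChainBetween.exists_of_triples (h : IsChainBetween (triples '' 𝒮) 𝒦 ℒ L)
    (h𝒦 : 𝒦.Nonempty) (hℒ : ℒ.Nonempty) :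
    ∃ U V l, l.map triples = L ∧ IsChainBetween 𝒮 U V l ∧
      (∀ x ∈ 𝒦, Majority x U) ∧ ∀ y ∈ ℒ, Majority y V := by
  obtain ⟨x, hx⟩ := h𝒦
  obtain ⟨y, hy⟩ := hℒ
  obtain ⟨l, hl𝒮, rfl⟩ := exists_map_eq_of_forall_mem_image h.mem
  have hminus : ∀ s ∈ l, ∀ x ∈ 𝒦, Majority x s.minus := List.forall_mem_map.1 h.subset_minus
  have hplus : ∀ s ∈ l, ∀ y ∈ ℒ, Majority y s.plus := List.forall_mem_map.1 h.subset_plus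
  have hl : l.Pairwise (· < ·) := (List.pairwise_map.1 h.pairwise).imp_of_mem fun hs ht hst =>
    lt_of_triples_lt_triples hst
      (((hminus _ hs x hx).exists_mem_inter (hminus _ ht x hx)).imp' _ fun _ => id)
      (((hplus _ hs y hy).exists_mem_inter (hplus _ ht y hy)).imp' _ fun _ => id)
  refine ⟨⋂ s ∈ l, s.minus, ⋂ s ∈ l, s.plus, l, rfl,
    ⟨hl, hl𝒮, fun s hs => Set.biInter_subset_of_mem (t := minus) hs,
      fun s hs => Set.biInter_subset_of_mem (t := plus) hs⟩,
    fun x hx => majority_iInter_minus hl fun s hs => hminus s hs x hx,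
    fun y hy => majority_iInter_plus hl fun s hs => hplus s hs y hy⟩

theorem IsChainBetween.exists_pair_of_triples (h : IsChainBetween (triples '' 𝒮) {x} {y} L) :
    ∃ i j m n l, i ≠ j ∧ m ≠ n ∧ IsChainBetween 𝒮 {t3c x i, t3c x j} {t3c y m, t3c y n} l ∧
      l.length = L.length := by
  obtain ⟨U, V, l, rfl, hl, hU, hV⟩ := h.exists_of_triples (by simp) (by simp)
  obtain ⟨i, j, hij, hi, hj⟩ := hU x rfl
  obtain ⟨m, n, hmn, hm, hn⟩ := hV y rfl
  exact ⟨i, j, m, n, l, hij, hmn, hl.anti (Set.pair_subset hi hj) (Set.pair_subset hm hn),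
    (List.length_map _).symm⟩

theorem crossratio_pair_le_crossratio_triples {i j m n : Fin 3} (hij : i ≠ j) (hmn : m ≠ n) :
    crossratio 𝒮 {t3c x i, t3c x j} {t3c y m, t3c y n} ≤
      crossratio (triples '' 𝒮) {x} {y} := by
  refine crossratio_le_iff.2 fun l hl => ?_
  have hx : ∀ z ∈ ({x} : Set (Theta3 X)), Majority z {t3c x i, t3c x j} := by
    rintro _ rfl
    exact ⟨i, j, hij, by simp, by simp⟩
  have hy : ∀ z ∈ ({y} : Set (Theta3 X)), Majority z {t3c y m, t3c y n} := by
    rintro _ rfl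
    exact ⟨m, n, hmn, by simp, by simp⟩
  simpa using (hl.map_triples hx hy).length_le_crossratio

theorem CrossBounded.triples (h𝒮 : CrossBounded 𝒮 k) :
    CrossBounded (Separation.triples '' 𝒮) k := by
  intro x y z w
  by_contra! hlt
  obtain ⟨hlt₁, hlt₂⟩ := hlt
  simp only [← not_le, crossratio_le_iff, not_forall, exists_prop] at hlt₁ hlt₂
  obtain ⟨L₁, hL₁, hlt₁⟩ := hlt₁
  obtain ⟨L₂, hL₂, hlt₂⟩ := hlt₂
  obtain ⟨U₁, V₁, l₁, rfl, h₁, hU₁, hV₁⟩ := hL₁.exists_of_triples (by simp) (by simp)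
  obtain ⟨U₂, V₂, l₂, rfl, h₂, hU₂, hV₂⟩ := hL₂.exists_of_triples (by simp) (by simp)
  obtain ⟨i, hxi⟩ := (hU₁ x (by simp)).exists_mem_inter (hU₂ x (by simp))
  obtain ⟨j, hyj⟩ := (hU₁ y (by simp)).exists_mem_inter (hV₂ y (by simp))
  obtain ⟨m, hzm⟩ := (hV₁ z (by simp)).exists_mem_inter (hU₂ z (by simp))
  obtain ⟨n, hwn⟩ := (hV₁ w (by simp)).exists_mem_inter (hV₂ w (by simp))
  have := h𝒮.length_le_or
    (h₁.anti (Set.pair_subset hxi.1 hyj.1) (Set.pair_subset hzm.1 hwn.1))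
    (h₂.anti (Set.pair_subset hxi.2 hzm.2) (Set.pair_subset hyj.2 hwn.2))
  simp only [List.length_map, not_le, Nat.cast_lt] at hlt₁ hlt₂
  omega

theorem IsChainBetween.not_lt_self (h : IsChainBetween 𝒮 U V l) (hfin : crossratio 𝒮 U V ≠ ⊤)
    (hs : s ∈ l) : ¬s < s := by
  refine fun hlt => hfin (ENat.eq_top_iff_forall_ge.2 fun n => ?_)
  have hchain : IsChainBetween 𝒮 U V (List.replicate n s) := by
    refine ⟨List.pairwise_replicate.2 (.inr hlt), ?_, ?_, ?_⟩ <;> intro t ht <;>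
      rw [List.eq_of_mem_replicate ht]
    exacts [h.mem s hs, h.subset_minus s hs, h.subset_plus s hs]
  simpa using hchain.length_le_crossratio

theorem IsChainBetween.insert_of_notMem (h : IsChainBetween 𝒮 U V (l₁ ++ s :: l₂))
    (hminus : u ∉ s.minus) (hplus : u ∉ s.plus) :
    IsChainBetween 𝒮 U (insert u V) l₁ ∧ IsChainBetween 𝒮 (insert u U) V l₂ := by
  obtain ⟨-, hl₂, hl₁⟩ := List.pairwise_append.1 h.pairwise
  exact ⟨(h.sublist (List.sublist_append_left _ _)).insert_right fun t ht =>
      (hl₁ t ht s List.mem_cons_self u).resolve_right hminus,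
    (h.sublist ((List.sublist_cons_self _ _).trans (List.sublist_append_right _ _))).insert_left
      fun t ht => (List.rel_of_pairwise_cons hl₂ ht u).resolve_left hplus⟩

theorem CrossBounded.length_le_or_of_majority {U' V' : Set X} {p q : X} (h𝒮 : CrossBounded 𝒮 k)
    (h₁ : IsChainBetween 𝒮 U V l₁) (h₂ : IsChainBetween 𝒮 U' V' l₂)
    (hxU : Majority x U) (hxU' : Majority x U') (hyV : Majority y V) (hyU' : Majority y U')
    (hp : p ∈ U ∩ V') (hq : q ∈ V ∩ V') : l₁.length ≤ k ∨ l₂.length ≤ k := by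
  obtain ⟨i, hxi⟩ := hxU.exists_mem_inter hxU'
  obtain ⟨j, hyj⟩ := hyV.exists_mem_inter hyU'
  exact h𝒮.length_le_or
    (h₁.anti (Set.pair_subset hxi.1 hp.1) (Set.pair_subset hyj.1 hq.1))
    (h₂.anti (Set.pair_subset hxi.2 hyj.2) (Set.pair_subset hp.2 hq.2))

theorem CrossBounded.crossratio_pair_singleton_le {p q : X} (h𝒮 : CrossBounded 𝒮 k)
    (h₁ : IsChainBetween 𝒮 U (insert u V) l₁) (h₂ : IsChainBetween 𝒮 (insert u U) V l₂)
    (hk₁ : k < l₁.length) (hk₂ : k < l₂.length)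
    (hx : Majority x U) (hy : Majority y V) (hp : p ∈ U) (hq : q ∈ V)
    (hdistinct : p ≠ u ∧ u ≠ q ∧ p ≠ q) :
    crossratio (Separation.triples '' 𝒮) {x, y} {⟨(p, u, q), hdistinct⟩} ≤ k := by
  refine crossratio_le_iff.2 fun L hL => ?_
  obtain ⟨U', V', l, rfl, h, hU', hV'⟩ := hL.exists_of_triples (by simp) (by simp)
  have hxU' := hU' x (by simp)
  have hyU' := hU' y (by simp)
  have hy' := hy.mono (Set.subset_insert u V)
  have hx' := hx.mono (Set.subset_insert u U)
  suffices l.length ≤ k by simpa using this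
  obtain ⟨hpV', huV'⟩ | ⟨huV', hqV'⟩ | ⟨hpV', hqV'⟩ := majority_mk_iff.1 (hV' _ rfl)
  · exact (h𝒮.length_le_or_of_majority h₁ h hx hxU' hy' hyU' ⟨hp, hpV'⟩
      ⟨Set.mem_insert u V, huV'⟩).resolve_left hk₁.not_ge
  · exact (h𝒮.length_le_or_of_majority h₂ h hx' hxU' hy hyU' ⟨Set.mem_insert u U, huV'⟩
      ⟨hq, hqV'⟩).resolve_left hk₂.not_ge
  · exact (h𝒮.length_le_or_of_majority h₁ h hx hxU' hy' hyU' ⟨hp, hpV'⟩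
      ⟨Set.mem_insert_of_mem u hq, hqV'⟩).resolve_left hk₁.not_ge

theorem CrossBounded.exists_intermediate (h𝒮 : CrossBounded 𝒮 k)
    (h : IsChainBetween 𝒮 U V (l₁ ++ s :: l₂)) (hs : ¬s < s) (hx : Majority x U)
    (hy : Majority y V) (hk₁ : k < l₁.length) (hk₂ : k < l₂.length) :
    ∃ m, IsChainBetween (Separation.triples '' 𝒮) {x} {m, y} (l₁.map Separation.triples) ∧
      IsChainBetween (Separation.triples '' 𝒮) {m, x} {y} (l₂.map Separation.triples) ∧
      crossratio (Separation.triples '' 𝒮) {x, y} {m} ≤ k := by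
  obtain ⟨u, hu_plus, hu_minus⟩ := not_lt_iff.1 hs
  obtain ⟨h₁, h₂⟩ := h.insert_of_notMem hu_minus hu_plus
  obtain ⟨i, hp, -⟩ := hx.exists_mem_inter hx
  obtain ⟨j, hq, -⟩ := hy.exists_mem_inter hy
  have hp_minus := h.subset_minus s (by simp) hp
  have hq_plus := h.subset_plus s (by simp) hq
  have hdistinct : t3c x i ≠ u ∧ u ≠ t3c y j ∧ t3c x i ≠ t3c y j :=
    ⟨ne_of_mem_of_not_mem hp_minus hu_minus, (ne_of_mem_of_not_mem hq_plus hu_plus).symm,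
      s.disjoint.ne_of_mem hp_minus hq_plus⟩
  refine ⟨⟨(t3c x i, u, t3c y j), hdistinct⟩, h₁.map_triples (by simpa using hx) ?_,
    h₂.map_triples ?_ (by simpa using hy),
    h𝒮.crossratio_pair_singleton_le h₁ h₂ hk₁ hk₂ hx hy hp hq hdistinct⟩
  · simpa [majority_mk_iff, hq] using hy.mono (Set.subset_insert u V)
  · simpa [majority_mk_iff, hp] using hx.mono (Set.subset_insert u U)

theorem CrossBounded.hasIntermediatePoints (h𝒮 : CrossBounded 𝒮 k)
    (hfin : ∀ x y : Theta3 X, crossratio (Separation.triples '' 𝒮) {x} {y} ≠ ⊤) :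
    HasIntermediatePoints (fun K L => (crossratio (Separation.triples '' 𝒮) K L).toNat) k := by
  intro x y i hki hi
  obtain ⟨L, hL, hlen⟩ := exists_length_eq_crossratio (hfin x y)
  obtain ⟨U, V, l, rfl, hl, hU, hV⟩ := hL.exists_of_triples (by simp) (by simp)
  rw [List.length_map] at hlen
  simp only [← hlen, ENat.toNat_natCast] at hi ⊢
  obtain ⟨l₁, s, l₂, rfl, rfl⟩ : ∃ l₁ s l₂, l = l₁ ++ s :: l₂ ∧ l₁.length = i :=
    ⟨l.take i, l[i], l.drop (i + 1), by simp, by simp; omega⟩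
  have hs : ¬s < s := fun hlt =>
    hL.not_lt_self (hfin x y) (List.mem_map_of_mem (by simp)) (triples_lt_triples hlt)
  rw [List.length_append, List.length_cons] at hi ⊢
  obtain ⟨m, hxm, hmy, hm⟩ :=
    h𝒮.exists_intermediate hl hs (hU x rfl) (hV y rfl) hki (by omega)
  have hxm_len := hxm.length_le_toNat_crossratio hfin (by simp) (by simp)
  have hmy_len := hmy.length_le_toNat_crossratio hfin (by simp) (by simp)
  rw [List.length_map] at hxm_len hmy_len
  exact ⟨m, hxm_len, by omega, ENat.toNat_le_of_le_natCast hm⟩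

end Separation

end Triples

section AnnulusSystems

variable {M : Type*} [TopologicalSpace M] {𝒜 : Set (Set M × Set M)} {K L : Set M}

/-- The pairs `(int A⁻, int A⁺)` for `A ∈ 𝒜`, the only data of `𝒜` that crossratios depend on. -/
def interiors (𝒜 : Set (Set M × Set M)) : Set (Separation M) :=
  {s | ∃ A ∈ 𝒜, s.minus = interior A.1 ∧ s.plus = interior A.2}

theorem swap_mem_interiors (hsym : ∀ A ∈ 𝒜, (A.2, A.1) ∈ 𝒜) :
    ∀ s ∈ interiors 𝒜, s.swap ∈ interiors 𝒜 :=
  fun _ ⟨A, hA, hminus, hplus⟩ => ⟨(A.2, A.1), hsym A hA, hplus, hminus⟩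

theorem crossratio_interiors_le : Separation.crossratio (interiors 𝒜) K L ≤ crossratio 𝒜 K L := by
  refine Separation.crossratio_le_iff.2 fun l hl => le_sSup ?_
  choose! A hA𝒜 hminus hplus using hl.mem
  rcases l.length.eq_zero_or_pos with hlen | hlen
  · exact .inl (by simp [hlen])
  set B : ℕ → Set M × Set M := fun i => if h : i < l.length then A l[i] else (∅, ∅)
  have hB : ∀ i, (h : i < l.length) → B i = A l[i] := fun i h => dif_pos h
  have hlast : l.length - 1 < l.length := by omega
  refine .inr ⟨l.length, rfl, hlen, B, fun i hi => ?_, ?_, fun i hi => ?_, ?_⟩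
  · exact hB i hi ▸ hA𝒜 _ (List.getElem_mem hi)
  · rw [hB 0 hlen, setLtAnn, ← hminus _ (List.getElem_mem hlen)]
    exact hl.subset_minus _ (List.getElem_mem hlen)
  · have hi' : i < l.length := by omega
    rw [hB i hi', hB (i + 1) hi, annLtAnn, ← hplus _ (List.getElem_mem hi'),
      ← hminus _ (List.getElem_mem hi)]
    exact Set.eq_univ_of_forall
      (List.pairwise_iff_getElem.1 hl.pairwise i (i + 1) hi' hi (Nat.lt_succ_self i))
  · rw [hB _ hlast, annLtSet, ← hplus _ (List.getElem_mem hlast)]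
    exact hl.subset_plus _ (List.getElem_mem hlast)

theorem crossratio_le_interiors (hdisj : ∀ A ∈ 𝒜, Disjoint (interior A.1) (interior A.2)) :
    crossratio 𝒜 K L ≤ Separation.crossratio (interiors 𝒜) K L := by
  refine sSup_le ?_
  rintro _ (rfl | ⟨m, rfl, hm, A, hA, hK, hlt, hL⟩)
  · exact zero_le
  obtain ⟨n, rfl⟩ := Nat.exists_eq_add_one.2 hm
  set f : Fin (n + 1) → Separation M := fun i =>
    ⟨interior (A i).1, interior (A i).2, hdisj _ (hA i i.2)⟩
  have hchain : Separation.IsChainBetween (interiors 𝒜) K L (List.ofFn f) :=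
    Separation.isChainBetween_ofFn (fun i => Set.eq_univ_iff_forall.1 (hlt i (by omega)))
      (fun i => ⟨A i, hA i i.2, rfl, rfl⟩) hK (by simpa [f, annLtSet] using hL)
  simpa using hchain.length_le_crossratio

theorem crossratio_interiors (hdisj : ∀ A ∈ 𝒜, Disjoint (interior A.1) (interior A.2))
    (K L : Set M) :
    Separation.crossratio (interiors 𝒜) K L = crossratio 𝒜 K L :=
  crossratio_interiors_le.antisymm (crossratio_le_interiors hdisj)

theorem theta3rho_eq_crossratio_triples
    (hdisj : ∀ A ∈ 𝒜, Disjoint (interior A.1) (interior A.2)) (x y : Theta3 M) :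
    theta3rho 𝒜 x y = Separation.crossratio (Separation.triples '' interiors 𝒜) {x} {y} := by
  simp only [theta3rho, ← crossratio_interiors hdisj]
  apply le_antisymm
  · refine sSup_le ?_
    rintro _ ⟨i, j, k, l, hij, hkl, rfl⟩
    exact Separation.crossratio_pair_le_crossratio_triples hij hkl
  · refine Separation.crossratio_le_iff.2 fun l hl => ?_
    obtain ⟨i, j, m, n, l', hij, hmn, hl', hlen⟩ := hl.exists_pair_of_triples
    exact le_sSup_of_le ⟨i, j, m, n, hij, hmn, rfl⟩ (hlen ▸ hl'.length_le_crossratio)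

theorem exists_theta3rho_eq (𝒜 : Set (Set M × Set M)) (x y : Theta3 M) :
    ∃ i j k l : Fin 3, i ≠ j ∧ k ≠ l ∧
      theta3rho 𝒜 x y = crossratio 𝒜 {t3c x i, t3c x j} {t3c y k, t3c y l} := by
  set S := {n : ℕ∞ | ∃ i j k l : Fin 3, i ≠ j ∧ k ≠ l ∧
      n = crossratio 𝒜 {t3c x i, t3c x j} {t3c y k, t3c y l}}
  have hnonempty : S.Nonempty := ⟨_, 0, 1, 0, 1, by decide, by decide, rfl⟩
  have hfinite : S.Finite := by
    refine (Set.finite_range fun p : Fin 3 × Fin 3 × Fin 3 × Fin 3 =>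
      crossratio 𝒜 {t3c x p.1, t3c x p.2.1} {t3c y p.2.2.1, t3c y p.2.2.2}).subset ?_
    rintro _ ⟨i, j, k, l, -, -, rfl⟩
    exact ⟨(i, j, k, l), rfl⟩
  exact hnonempty.csSup_mem hfinite

theorem theta3rho_ne_top
    (hA1 : ∀ x y z w : M, x ≠ y → z ≠ w → crossratio 𝒜 {x, y} {z, w} ≠ ⊤) (x y : Theta3 M) :
    theta3rho 𝒜 x y ≠ ⊤ := by
  obtain ⟨i, j, k, l, hij, hkl, hρ⟩ := exists_theta3rho_eq 𝒜 x y
  exact hρ ▸ hA1 _ _ _ _ ((t3c_injective x).ne hij) ((t3c_injective y).ne hkl)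

end AnnulusSystems

section Invariance

variable {G M : Type*} [Group G] [TopologicalSpace M] {act : G → M → M} {𝒜 : Set (Set M × Set M)}

/-- The homeomorphism by which a group element acts. -/
def IsActionByHomeos.homeomorph (hact : IsActionByHomeos act) (g : G) : M ≃ₜ M where
  toFun := act g
  invFun := act g⁻¹
  left_inv x := by rw [← hact.1.2, inv_mul_cancel, hact.1.1]
  right_inv x := by rw [← hact.1.2, mul_inv_cancel, hact.1.1]
  continuous_toFun := hact.2 g
  continuous_invFun := hact.2 g⁻¹

theorem crossratio_le_image (φ : M ≃ₜ M) (hφ : ∀ A ∈ 𝒜, (φ '' A.1, φ '' A.2) ∈ 𝒜) (K L : Set M) :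
    crossratio 𝒜 K L ≤ crossratio 𝒜 (φ '' K) (φ '' L) := by
  refine sSup_le_sSup fun n hn => hn.imp_right ?_
  rintro ⟨m, rfl, hm, A, hA, hK, hlt, hL⟩
  refine ⟨m, rfl, hm, fun i => (φ '' (A i).1, φ '' (A i).2), fun i hi => hφ _ (hA i hi), ?_,
    fun i hi => ?_, ?_⟩
  · rw [setLtAnn, ← φ.image_interior]
    exact Set.image_mono hK
  · rw [annLtAnn, ← φ.image_interior, ← φ.image_interior, ← Set.image_union, hlt i hi,
      Set.image_univ_of_surjective φ.surjective]
  · rw [annLtSet, ← φ.image_interior]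
    exact Set.image_mono hL

theorem crossratio_image (hact : IsActionByHomeos act)
    (hinv : ∀ g : G, ∀ A ∈ 𝒜, (act g '' A.1, act g '' A.2) ∈ 𝒜) (g : G) (K L : Set M) :
    crossratio 𝒜 (act g '' K) (act g '' L) = crossratio 𝒜 K L := by
  have hle : ∀ g K L, crossratio 𝒜 K L ≤ crossratio 𝒜 (act g '' K) (act g '' L) := fun g =>
    crossratio_le_image (hact.homeomorph g) (hinv g)
  have hcancel : ∀ K, act g⁻¹ '' (act g '' K) = K := (hact.homeomorph g).toEquiv.symm_image_image
  refine le_antisymm ?_ (hle g K L)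
  simpa only [hcancel] using hle g⁻¹ (act g '' K) (act g '' L)

theorem theta3rho_theta3Map (hact : IsActionByHomeos act)
    (hinv : ∀ g : G, ∀ A ∈ 𝒜, (act g '' A.1, act g '' A.2) ∈ 𝒜) (g : G) (x y : Theta3 M) :
    theta3rho 𝒜 (theta3Map hact.1 g x) (theta3Map hact.1 g y) = theta3rho 𝒜 x y := by
  simp only [theta3rho, t3c_theta3Map, ← Set.image_pair, crossratio_image hact hinv]

end Invariance

theorem statement9_general {G M : Type*} [Group G] [TopologicalSpace M]
    {act : G → M → M} (hact : IsActionByHomeos act) (𝒜 : Set (Set M × Set M))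
    (hdisj : ∀ A ∈ 𝒜, Disjoint (interior A.1) (interior A.2))
    (hsym : ∀ A ∈ 𝒜, (A.2, A.1) ∈ 𝒜)
    (hinv : ∀ g : G, ∀ A ∈ 𝒜, (act g '' A.1, act g '' A.2) ∈ 𝒜)
    (hA1 : ∀ x y z w : M, x ≠ y → z ≠ w → crossratio 𝒜 {x, y} {z, w} ≠ ⊤)
    (hA2 : ∃ k : ℕ, ∀ x y z w : M,
      ¬((k : ℕ∞) < crossratio 𝒜 {x, y} {z, w} ∧ (k : ℕ∞) < crossratio 𝒜 {x, z} {y, w})) :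
    (∀ a b : Theta3 M, theta3rho 𝒜 a b ≠ ⊤) ∧
    IsPathQuasimetric (fun a b : Theta3 M => ((theta3rho 𝒜 a b).toNat : ℝ)) ∧
    IsHyperbolicQM (fun a b : Theta3 M => ((theta3rho 𝒜 a b).toNat : ℝ)) ∧
    ∀ (g : G) (a b : Theta3 M),
      theta3rho 𝒜 (theta3Map hact.1 g a) (theta3Map hact.1 g b) = theta3rho 𝒜 a b := by
  obtain ⟨k, hk⟩ := hA2
  have hρ := theta3rho_eq_crossratio_triples hdisj
  have hfin := theta3rho_ne_top hA1
  have hcross : Separation.CrossBounded (interiors 𝒜) k := fun x y z w => by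
    simpa only [crossratio_interiors hdisj, not_and_or, not_lt] using hk x y z w
  simp only [hρ] at hfin
  have htree := hcross.triples.isTreelike
    (Separation.swap_mem_triples (swap_mem_interiors hsym)) hfin
  refine ⟨theta3rho_ne_top hA1, ?_, ?_, theta3rho_theta3Map hact hinv⟩
  · simpa only [hρ] using htree.isPathQuasimetric (hcross.hasIntermediatePoints hfin)
  · simpa only [hρ] using htree.isHyperbolicQM

/-- If `𝒜` is a symmetric `G`-invariant annulus system on `M`
satisfying axioms (A1) and (A2), then the associated function `ρ` on the space of
distinct triples takes only finite values and is a hyperbolic `G`-invariant path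
quasimetric. -/
theorem statement9 {G M : Type*} [Group G] [TopologicalSpace M]
    {act : G → M → M} (hact : IsActionByHomeos act)
    (𝒜 : Set (Set M × Set M)) (hann : ∀ A ∈ 𝒜, IsAnnulus A)
    (hsym : ∀ A ∈ 𝒜, (A.2, A.1) ∈ 𝒜)
    (hinv : ∀ (g : G), ∀ A ∈ 𝒜, (act g '' A.1, act g '' A.2) ∈ 𝒜)
    (hA1 : ∀ x y z w : M, x ≠ y → z ≠ w → crossratio 𝒜 {x, y} {z, w} ≠ ⊤)
    (hA2 : ∃ k : ℕ, ∀ x y z w : M,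
      ¬((k : ℕ∞) < crossratio 𝒜 {x, y} {z, w} ∧ (k : ℕ∞) < crossratio 𝒜 {x, z} {y, w})) :
    (∀ a b : Theta3 M, theta3rho 𝒜 a b ≠ ⊤) ∧
    IsPathQuasimetric (fun a b : Theta3 M => ((theta3rho 𝒜 a b).toNat : ℝ)) ∧
    IsHyperbolicQM (fun a b : Theta3 M => ((theta3rho 𝒜 a b).toNat : ℝ)) ∧
    ∀ (g : G) (a b : Theta3 M),
      theta3rho 𝒜 (theta3Map hact.1 g a) (theta3Map hact.1 g b) = theta3rho 𝒜 a b :=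
  statement9_general hact 𝒜 (fun A hA => (Set.disjoint_iff_inter_eq_empty.2 (hann A hA).2.2.1).mono
    interior_subset interior_subset) hsym hinv hA1 hA2
end
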